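/- Let n ≥ 2, α ≥ 0, 1 ≤ s < ∞, and let Ω_α = {(x, y₁, …, y_{n−1}) ∈ ℝⁿ : 0 < x < 1, (y₁² + ⋯ + y_{n−1}²)^{1/2} < x^α}. Then Ω_α is an L^s-averaging domain if and only if (α − 1)(s − n + 1) < n. -/

import Mathlib

/-!
Averages of `u` over neighbouring Whitney balls of `Ω` differ by at most a multiple of the supremum
`M` of the mean oscillations of `u` over balls. If the Whitney ball at `z` is joined to a central
one by a chain of `G z` neighbours, then the average at `z` is within a multiple of `G z * M` of a
constant, so `Ω` is `L^s`-averaging as soon as `G` is `s`-integrable. In the cusp domain, the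
segment from `z` to a fixed point of the axis gives, for every `δ > 0`, such a chain with
`G z ≲ x ^ (-(max α 1 - 1 + δ)) * ε ^ (-δ)`, where `x = z 0` and `ε` is the relative depth of `z`.
Since `{x < t}` occupies the proportion `t ^ (1 + α (n - 1))` of the domain and `{ε < t}` a
proportion `O(t)`, this is `s`-integrable for small `δ` once
`(max α 1 - 1) s < 1 + α (n - 1)`, which for `α > 1` rearranges to `(α - 1) (s - n + 1) < n`.

Conversely, if `α > 1` then a ball in the domain with centre `a` has radius `≲ (a 0) ^ α`, so that
`u = x ^ (1 - α)`, whose derivative is of order `x ^ (-α)`, has bounded oscillation on balls; but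
it is in `L^s` only if `(α - 1) s < 1 + α (n - 1)`.
-/

open MeasureTheory Metric Set
open scoped ENNReal

/-- The normalized `L^s`-mean oscillation integral `(1/|E|) ∫_E |u - u_E|^s dz`. -/
noncomputable def lsAvgE {n : ℕ} (s : ℝ) (u : EuclideanSpace ℝ (Fin n) → ℝ)
    (E : Set (EuclideanSpace ℝ (Fin n))) : ℝ≥0∞ :=
  (volume E)⁻¹ * ∫⁻ z in E, ENNReal.ofReal (|u z - (⨍ y in E, u y)| ^ s)

/-- `Ω` is an `L^s`-averaging domain: there is a finite constant `C` such that for every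
locally integrable `u`, `((1/|Ω|) ∫_Ω |u - u_Ω|^s)^{1/s} ≤ C · sup_B ((1/|B|) ∫_B |u - u_B|^s)^{1/s}`,
the supremum over all open balls `B ⊆ Ω`. -/
def IsLsAveragingDomain {n : ℕ} (s : ℝ) (Ω : Set (EuclideanSpace ℝ (Fin n))) : Prop :=
  ∃ C : ℝ≥0∞, C ≠ ⊤ ∧ ∀ u : EuclideanSpace ℝ (Fin n) → ℝ,
    MeasureTheory.LocallyIntegrableOn u Ω volume →
      (lsAvgE s u Ω) ^ (1/s) ≤
        C * ⨆ (x : EuclideanSpace ℝ (Fin n)) (ρ : ℝ) (_ : 0 < ρ ∧ ball x ρ ⊆ Ω),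
          (lsAvgE s u (ball x ρ)) ^ (1/s)

/-- The distance of `z` from the first coordinate axis. -/
noncomputable def radial {n : ℕ} [NeZero n] (z : EuclideanSpace ℝ (Fin n)) : ℝ :=
  Real.sqrt (∑ i ∈ Finset.univ.erase (0 : Fin n), z i ^ 2)

/-- The cusp domain `Ω_α = {0 < x < 1, |y| < x^α} ⊆ ℝⁿ`. -/
noncomputable def cuspDomain (n : ℕ) [NeZero n] (α : ℝ) : Set (EuclideanSpace ℝ (Fin n)) :=
  {z | 0 < z 0 ∧ z 0 < 1 ∧ radial z < (z 0) ^ α}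

open scoped ProbabilityTheory

section MeanOscillation

variable {X : Type*} [MeasurableSpace X] {μ ν : Measure X} {u : X → ℝ} {p K : ℝ≥0∞}

lemma memLp_of_eLpNorm_sub_const_ne_top [IsFiniteMeasure μ] (hu : AEStronglyMeasurable u μ)
    {c : ℝ} (h : eLpNorm (fun z => u z - c) p μ ≠ ⊤) : MemLp u p μ := by
  have hsub : MemLp (fun z => u z - c) p μ := ⟨hu.sub aestronglyMeasurable_const, h.lt_top⟩
  exact (by ext z; simp : u = (fun z => u z - c) + fun _ => c) ▸ hsub.add (memLp_const c)

lemma enorm_integral_sub_le_mul_eLpNorm [IsProbabilityMeasure μ] [IsProbabilityMeasure ν]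
    (hνμ : ν ≤ K • μ) (hK : K ≠ ⊤) (hp : 1 ≤ p) (hu : AEStronglyMeasurable u μ) (c : ℝ) :
    ‖∫ y, u y ∂ν - c‖ₑ ≤ K * eLpNorm (fun z => u z - c) p μ := by
  have hK0 : K ≠ 0 := by
    rintro rfl
    simpa using hνμ univ
  by_cases htop : eLpNorm (fun z => u z - c) p μ = ⊤
  · simp [htop, hK0]
  have hμ : Integrable u μ := (memLp_of_eLpNorm_sub_const_ne_top hu htop).integrable hp
  have hν : Integrable u ν := (hμ.smul_measure hK).mono_measure hνμ
  calc ‖∫ y, u y ∂ν - c‖ₑ = ‖∫ y, (u y - c) ∂ν‖ₑ := by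
        rw [integral_sub hν (integrable_const c)]
        simp
    _ ≤ ∫⁻ y, ‖u y - c‖ₑ ∂ν := enorm_integral_le_lintegral_enorm _
    _ ≤ ∫⁻ y, ‖u y - c‖ₑ ∂(K • μ) := lintegral_mono' hνμ le_rfl
    _ = K * eLpNorm (fun z => u z - c) 1 μ := by
        rw [lintegral_smul_measure, smul_eq_mul, eLpNorm_one_eq_lintegral_enorm]
    _ ≤ K * eLpNorm (fun z => u z - c) p μ := by
        gcongr
        exact eLpNorm_le_eLpNorm_of_exponent_le hp (hu.sub aestronglyMeasurable_const)

lemma eLpNorm_sub_integral_le [IsProbabilityMeasure μ] (hp : 1 ≤ p)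
    (hu : AEStronglyMeasurable u μ) (c : ℝ) :
    eLpNorm (fun z => u z - ∫ y, u y ∂μ) p μ ≤ 2 * eLpNorm (fun z => u z - c) p μ := by
  have hmean : ‖∫ y, u y ∂μ - c‖ₑ ≤ eLpNorm (fun z => u z - c) p μ := by
    simpa using enorm_integral_sub_le_mul_eLpNorm (K := 1) (by simp) (by simp) hp hu c
  have hsplit : (fun z => u z - ∫ y, u y ∂μ) =
      (fun z => u z - c) - fun _ => ∫ y, u y ∂μ - c := by
    ext z
    simp
  rw [hsplit, two_mul]
  refine (eLpNorm_sub_le (hu.sub aestronglyMeasurable_const) aestronglyMeasurable_const hp).trans ?_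
  gcongr
  · exact le_rfl
  · rw [eLpNorm_const _ (one_pos.trans_le hp).ne' (IsProbabilityMeasure.ne_zero μ)]
    simpa using hmean

lemma setAverage_eq_integral_cond (u : X → ℝ) (A : Set X) :
    ⨍ y in A, u y ∂μ = ∫ y, u y ∂μ[|A] :=
  setAverage_eq' μ u A

lemma cond_le_smul_cond {A B : Set X} (hAB : A ⊆ B) (hB0 : μ B ≠ 0) (hB : μ B ≠ ⊤)
    (hBA : μ B ≤ K * μ A) : μ[|A] ≤ K • μ[|B] := by
  have hA0 : μ A ≠ 0 := fun h => hB0 (by simpa [h] using hBA)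
  have hA : μ A ≠ ⊤ := ne_top_of_le_ne_top hB (measure_mono hAB)
  have hinv : (μ A)⁻¹ ≤ K * (μ B)⁻¹ := by
    rw [ENNReal.inv_le_iff_le_mul (fun _ => hA0) (fun h => absurd h hA)]
    calc (1 : ℝ≥0∞) = μ B * (μ B)⁻¹ := (ENNReal.mul_inv_cancel hB0 hB).symm
      _ ≤ K * μ A * (μ B)⁻¹ := by gcongr
      _ = μ A * (K * (μ B)⁻¹) := by ring
  rw [ProbabilityTheory.cond, ProbabilityTheory.cond, smul_smul]
  exact Measure.le_iff'.2 fun S => by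
    simp only [Measure.smul_apply, smul_eq_mul]
    gcongr

lemma lintegral_cond (f : X → ℝ≥0∞) (A : Set X) :
    ∫⁻ z, f z ∂μ[|A] = (μ A)⁻¹ * ∫⁻ z in A, f z ∂μ := by
  rw [ProbabilityTheory.cond, lintegral_smul_measure, smul_eq_mul]

lemma eLpNorm_ofReal_eq_lintegral_rpow {s : ℝ} (hs : 0 < s) (f : X → ℝ) :
    eLpNorm f (ENNReal.ofReal s) μ = (∫⁻ z, ‖f z‖ₑ ^ s ∂μ) ^ (1 / s) := by
  rw [eLpNorm_eq_lintegral_rpow_enorm_toReal (by simpa using hs) ENNReal.ofReal_ne_top,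
    ENNReal.toReal_ofReal hs.le]

lemma lsAvgE_rpow_eq_eLpNorm {n : ℕ} {s : ℝ} (hs : 0 < s) (u : EuclideanSpace ℝ (Fin n) → ℝ)
    (A : Set (EuclideanSpace ℝ (Fin n))) :
    lsAvgE s u A ^ (1 / s) =
      eLpNorm (fun z => u z - ⨍ y in A, u y) (ENNReal.ofReal s) volume[|A] := by
  rw [eLpNorm_ofReal_eq_lintegral_rpow hs, lintegral_cond, lsAvgE]
  simp_rw [← ENNReal.ofReal_rpow_of_nonneg (abs_nonneg _) hs.le, ← Real.enorm_eq_ofReal_abs]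

end MeanOscillation

/-- The `BMO_p(Ω)` seminorm: the supremum of the normalized `L^p` mean oscillations of `u` over the
open balls contained in `Ω`. -/
noncomputable def ballOscillation {X : Type*} [MeasurableSpace X] [PseudoMetricSpace X]
    (μ : Measure X) (p : ℝ≥0∞) (u : X → ℝ) (Ω : Set X) : ℝ≥0∞ :=
  ⨆ (x : X) (ρ : ℝ) (_ : 0 < ρ ∧ ball x ρ ⊆ Ω),
    eLpNorm (fun z => u z - ⨍ y in ball x ρ, u y ∂μ) p μ[|ball x ρ]

lemma isLsAveragingDomain_iff {n : ℕ} {s : ℝ} (hs : 0 < s) {Ω : Set (EuclideanSpace ℝ (Fin n))} :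
    IsLsAveragingDomain s Ω ↔ ∃ C : ℝ≥0∞, C ≠ ⊤ ∧
      ∀ u : EuclideanSpace ℝ (Fin n) → ℝ, LocallyIntegrableOn u Ω →
        eLpNorm (fun z => u z - ⨍ y in Ω, u y) (ENNReal.ofReal s) volume[|Ω] ≤
          C * ballOscillation volume (ENNReal.ofReal s) u Ω := by
  simp only [IsLsAveragingDomain, ballOscillation, lsAvgE_rpow_eq_eLpNorm hs]

lemma eLpNorm_sub_setAverage_le_ballOscillation {X : Type*} [MeasurableSpace X]
    [PseudoMetricSpace X] (μ : Measure X) (p : ℝ≥0∞) (u : X → ℝ) {Ω : Set X} {x : X} {ρ : ℝ}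
    (hρ : 0 < ρ) (hball : ball x ρ ⊆ Ω) :
    eLpNorm (fun z => u z - ⨍ y in ball x ρ, u y ∂μ) p μ[|ball x ρ] ≤ ballOscillation μ p u Ω :=
  le_iSup₂_of_le x ρ (le_iSup_of_le ⟨hρ, hball⟩ le_rfl)

lemma isProbabilityMeasure_cond_ball {X : Type*} [MeasurableSpace X] [PseudoMetricSpace X]
    [ProperSpace X] (μ : Measure X) [μ.IsOpenPosMeasure] [IsFiniteMeasureOnCompacts μ] (x : X)
    {r : ℝ} (hr : 0 < r) : IsProbabilityMeasure μ[|ball x r] :=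
  ProbabilityTheory.cond_isProbabilityMeasure_of_finite (measure_ball_pos μ x hr).ne'
    measure_ball_lt_top.ne

section Whitney

section PseudoMetricSpace

variable {X : Type*} [PseudoMetricSpace X] {Ω : Set X}

/-- The radius of the Whitney ball at `z`, a quarter of the distance to the complement of `Ω`, so
that the fourfold enlargement of the ball still lies in `Ω`. -/
noncomputable def whitneyRadius (Ω : Set X) (z : X) : ℝ := infDist z Ωᶜ / 4

lemma whitneyRadius_pos (hΩ : IsOpen Ω) (hne : Ωᶜ.Nonempty) {z : X} (hz : z ∈ Ω) :
    0 < whitneyRadius Ω z :=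
  div_pos ((hΩ.isClosed_compl.notMem_iff_infDist_pos hne).1 (not_not_intro hz)) four_pos

lemma mem_of_whitneyRadius_pos {z : X} (hz : 0 < whitneyRadius Ω z) : z ∈ Ω := by
  by_contra hzΩ
  simp [whitneyRadius, infDist_zero_of_mem (mem_compl hzΩ)] at hz

lemma whitneyRadius_le_add_dist (Ω : Set X) (z z' : X) :
    whitneyRadius Ω z ≤ whitneyRadius Ω z' + dist z z' / 4 := by
  have := infDist_le_infDist_add_dist (s := Ωᶜ) (x := z) (y := z')
  simp only [whitneyRadius]
  linarith

lemma continuous_whitneyRadius (Ω : Set X) : Continuous (whitneyRadius Ω) :=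
  (continuous_infDist_pt _).div_const 4

lemma ball_four_mul_whitneyRadius_subset (Ω : Set X) (z : X) :
    ball z (4 * whitneyRadius Ω z) ⊆ Ω := by
  simpa [whitneyRadius, mul_div_cancel₀] using ball_infDist_compl_subset (s := Ω) (x := z)

lemma ball_whitneyRadius_subset (hΩ : IsOpen Ω) (hne : Ωᶜ.Nonempty) {z : X} (hz : z ∈ Ω) :
    ball z (whitneyRadius Ω z) ⊆ Ω :=
  (ball_subset_ball (by linarith [whitneyRadius_pos hΩ hne hz])).trans
    (ball_four_mul_whitneyRadius_subset Ω z)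

/-- `w` oscillates by at most `D` between the centres of neighbouring Whitney balls of `Ω`. -/
def WhitneyOscLE (Ω : Set X) (w : X → ℝ) (D : ℝ≥0∞) : Prop :=
  ∀ z ∈ Ω, ∀ z' ∈ Ω, dist z z' ≤ whitneyRadius Ω z → edist (w z) (w z') ≤ D

/-- `G` bounds the number of neighbouring Whitney balls needed to join a point of `Ω` to `z₀`, hence
plays the role of the quasihyperbolic distance to `z₀`. -/
def WhitneyChainBound (Ω : Set X) (z₀ : X) (G : X → ℝ≥0∞) : Prop :=
  ∀ ⦃w : X → ℝ⦄ ⦃D : ℝ≥0∞⦄, WhitneyOscLE Ω w D → ∀ z ∈ Ω, edist (w z) (w z₀) ≤ D * G z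

end PseudoMetricSpace

variable {E : Type*} [NormedAddCommGroup E] [NormedSpace ℝ E] [FiniteDimensional ℝ E]
  [MeasurableSpace E] [BorelSpace E] (μ : Measure E) [μ.IsAddHaarMeasure] {Ω : Set E}

local notation "d" => Module.finrank ℝ E

lemma addHaar_ball_le_of_le_mul (x y : E) {r R k : ℝ} (hk : 0 < k) (hR : R ≤ k * r) :
    μ (ball x R) ≤ ENNReal.ofReal (k ^ d) * μ (ball y r) :=
  calc μ (ball x R) ≤ μ (ball x (k * r)) := measure_mono (ball_subset_ball hR)
    _ = ENNReal.ofReal (k ^ d) * μ (ball y r) := by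
      rw [Measure.addHaar_ball_mul_of_pos _ _ hk, Measure.addHaar_ball_center _ y]

lemma edist_setAverage_ball_le {p : ℝ≥0∞} (hp : 1 ≤ p) {u : E → ℝ}
    (hu : AEStronglyMeasurable u (μ.restrict Ω)) {x y : E} {r R k : ℝ} (hk : 0 < k) (hr : 0 < r)
    (hR : 0 < R) (hRr : R ≤ k * r) (hsub : ball y r ⊆ ball x R) (hball : ball x R ⊆ Ω) :
    edist (⨍ z in ball y r, u z ∂μ) (⨍ z in ball x R, u z ∂μ) ≤
      ENNReal.ofReal (k ^ d) * ballOscillation μ p u Ω := by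
  have := isProbabilityMeasure_cond_ball μ x hR
  have := isProbabilityMeasure_cond_ball μ y hr
  have hcond : μ[|ball y r] ≤ ENNReal.ofReal (k ^ d) • μ[|ball x R] :=
    cond_le_smul_cond hsub (measure_ball_pos μ x hR).ne' measure_ball_lt_top.ne
      (addHaar_ball_le_of_le_mul μ x y hk hRr)
  have huB : AEStronglyMeasurable u μ[|ball x R] :=
    (hu.mono_measure (Measure.restrict_mono hball le_rfl)).smul_measure _
  rw [edist_eq_enorm_sub, setAverage_eq_integral_cond u (ball y r)]
  refine (enorm_integral_sub_le_mul_eLpNorm hcond ENNReal.ofReal_ne_top hp huB _).trans ?_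
  gcongr
  exact eLpNorm_sub_setAverage_le_ballOscillation μ p u hR hball

lemma whitneyOscLE_setAverage (hΩ : IsOpen Ω) (hne : Ωᶜ.Nonempty) {p : ℝ≥0∞} (hp : 1 ≤ p)
    {u : E → ℝ} (hu : AEStronglyMeasurable u (μ.restrict Ω)) :
    WhitneyOscLE Ω (fun z => ⨍ y in ball z (whitneyRadius Ω z), u y ∂μ)
      (2 * ENNReal.ofReal (6 ^ d) * ballOscillation μ p u Ω) := by
  intro z hz z' hz' hdist
  have hr := whitneyRadius_pos hΩ hne hz
  have hr' := whitneyRadius_pos hΩ hne hz'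
  have hle := whitneyRadius_le_add_dist Ω z z'
  have hle' := whitneyRadius_le_add_dist Ω z' z
  rw [dist_comm z' z] at hle'
  have hbig := ball_four_mul_whitneyRadius_subset Ω z
  refine (edist_triangle_right _ _
    (⨍ y in ball z (4 * whitneyRadius Ω z), u y ∂μ)).trans ?_
  rw [mul_assoc, two_mul]
  refine add_le_add
    (edist_setAverage_ball_le μ hp hu (by norm_num) hr (by positivity) (by linarith)
      (ball_subset_ball (by linarith)) hbig)
    (edist_setAverage_ball_le μ hp hu (by norm_num) hr' (by positivity) (by linarith)
      (ball_subset_ball' ?_) hbig)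
  rw [dist_comm z' z]
  linarith

lemma measurableSet_dist_lt_whitneyRadius (Ω : Set E) :
    MeasurableSet {q : E × E | dist q.2 q.1 < whitneyRadius Ω q.1} :=
  (isOpen_lt (by fun_prop)
    ((continuous_whitneyRadius Ω).comp continuous_fst)).measurableSet

lemma measurable_addHaar_ball_whitneyRadius (Ω : Set E) :
    Measurable fun z => μ (ball z (whitneyRadius Ω z)) :=
  measurable_measure_prodMk_left (measurableSet_dist_lt_whitneyRadius Ω)

lemma one_le_mul_lintegral_inv_addHaar_ball_whitneyRadius (hΩ : IsOpen Ω) (hne : Ωᶜ.Nonempty)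
    {y : E} (hy : y ∈ Ω) :
    1 ≤ ENNReal.ofReal (3 ^ d) * ∫⁻ z in Ω, {z | dist y z < whitneyRadius Ω z}.indicator
      (fun z => (μ (ball z (whitneyRadius Ω z)))⁻¹) z ∂μ := by
  have hr := whitneyRadius_pos hΩ hne hy
  set b := ball y (whitneyRadius Ω y / 2)
  have hb : b ⊆ Ω := (ball_subset_ball (by linarith)).trans (ball_whitneyRadius_subset hΩ hne hy)
  have hb0 : μ b ≠ 0 := (measure_ball_pos μ y (half_pos hr)).ne'
  have hbtop : μ b ≠ ⊤ := measure_ball_lt_top.ne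
  have hweight : ∀ z ∈ b, (ENNReal.ofReal (3 ^ d) * μ b)⁻¹ ≤
      {z | dist y z < whitneyRadius Ω z}.indicator
        (fun z => (μ (ball z (whitneyRadius Ω z)))⁻¹) z := by
    intro z hz
    have hyz : dist y z < whitneyRadius Ω y / 2 := by rwa [dist_comm]
    have hle := whitneyRadius_le_add_dist Ω y z
    have hle' := whitneyRadius_le_add_dist Ω z y
    rw [dist_comm z y] at hle'
    rw [indicator_of_mem (by rw [mem_ofPred_eq]; linarith)]
    gcongr
    exact addHaar_ball_le_of_le_mul μ _ _ three_pos (by linarith)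
  calc (1 : ℝ≥0∞) = ENNReal.ofReal (3 ^ d) * ∫⁻ _ in b, (ENNReal.ofReal (3 ^ d) * μ b)⁻¹ ∂μ := by
        rw [setLIntegral_const, ENNReal.mul_inv (.inr hbtop) (.inr hb0), ← mul_assoc, ← mul_assoc,
          ENNReal.mul_inv_cancel (by simp) ENNReal.ofReal_ne_top, one_mul,
          ENNReal.inv_mul_cancel hb0 hbtop]
    _ ≤ _ := by
        gcongr 1
        exact (setLIntegral_mono' measurableSet_ball hweight).trans (lintegral_mono_set hb)

theorem lintegral_le_mul_lintegral_cond_ball_whitneyRadius (hΩ : IsOpen Ω) (hne : Ωᶜ.Nonempty)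
    {f : E → ℝ≥0∞} (hf : AEMeasurable f (μ.restrict Ω)) :
    ∫⁻ z in Ω, f z ∂μ ≤ ENNReal.ofReal (3 ^ d) *
      ∫⁻ z in Ω, ∫⁻ y, f y ∂μ[|ball z (whitneyRadius Ω z)] ∂μ := by
  set k : E → E → ℝ≥0∞ := fun z y => {z | dist y z < whitneyRadius Ω z}.indicator
    (fun z => (μ (ball z (whitneyRadius Ω z)))⁻¹) z
  have hk : Measurable (Function.uncurry k) :=
    ((measurable_addHaar_ball_whitneyRadius μ Ω).inv.comp measurable_fst).indicator
      (measurableSet_dist_lt_whitneyRadius Ω)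
  have hball : ∀ z ∈ Ω, ∫⁻ y, f y ∂μ[|ball z (whitneyRadius Ω z)] =
      ∫⁻ y in Ω, k z y * f y ∂μ := by
    intro z hz
    have hkf : (fun y => k z y * f y) = (ball z (whitneyRadius Ω z)).indicator
        fun y => (μ (ball z (whitneyRadius Ω z)))⁻¹ * f y := by
      ext y
      by_cases hy : dist y z < whitneyRadius Ω z <;> simp [k, hy, indicator]
    rw [hkf, lintegral_indicator measurableSet_ball, Measure.restrict_restrict measurableSet_ball,
      inter_eq_left.2 (ball_whitneyRadius_subset hΩ hne hz), lintegral_cond, lintegral_const_mul']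
    exact ENNReal.inv_ne_top.2 (measure_ball_pos μ z (whitneyRadius_pos hΩ hne hz)).ne'
  rw [setLIntegral_congr_fun hΩ.measurableSet hball,
    lintegral_lintegral_swap (hk.aemeasurable.mul hf.comp_snd),
    ← lintegral_const_mul' _ _ ENNReal.ofReal_ne_top]
  refine setLIntegral_mono' hΩ.measurableSet fun y hy => ?_
  have hky : Measurable fun z => k z y := hk.comp measurable_prodMk_right
  rw [lintegral_mul_const _ hky, ← mul_assoc]
  exact le_mul_of_one_le_left' (one_le_mul_lintegral_inv_addHaar_ball_whitneyRadius μ hΩ hne hy)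

lemma lintegral_enorm_sub_rpow_le {X : Type*} [MeasurableSpace X] (ν : Measure X)
    [IsProbabilityMeasure ν] {s : ℝ} (hs : 1 ≤ s) (u : X → ℝ) (a c : ℝ) :
    ∫⁻ y, ‖u y - c‖ₑ ^ s ∂ν ≤
      2 ^ (s - 1) * (eLpNorm (fun y => u y - a) (ENNReal.ofReal s) ν ^ s + edist a c ^ s) := by
  have hs0 : 0 < s := by linarith
  calc ∫⁻ y, ‖u y - c‖ₑ ^ s ∂ν
      ≤ ∫⁻ y, 2 ^ (s - 1) * (‖u y - a‖ₑ ^ s + edist a c ^ s) ∂ν := by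
        refine lintegral_mono fun y => ?_
        refine le_trans ?_ (ENNReal.rpow_add_le_mul_rpow_add_rpow _ _ hs)
        gcongr
        simpa only [edist_eq_enorm_sub] using edist_triangle (u y) a c
    _ = 2 ^ (s - 1) * (∫⁻ y, ‖u y - a‖ₑ ^ s ∂ν + edist a c ^ s) := by
        rw [lintegral_const_mul' _ _ (by finiteness), lintegral_add_right _ measurable_const]
        simp
    _ = _ := by
        rw [eLpNorm_ofReal_eq_lintegral_rpow hs0, one_div, ENNReal.rpow_inv_rpow hs0.ne']

theorem exists_lintegral_enorm_sub_rpow_le (hΩ : IsOpen Ω) (hne : Ωᶜ.Nonempty) {s : ℝ}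
    (hs : 1 ≤ s) {z₀ : E} {G : E → ℝ≥0∞} (hG : WhitneyChainBound Ω z₀ G) {u : E → ℝ}
    (hu : AEStronglyMeasurable u (μ.restrict Ω))
    (htop : ballOscillation μ (ENNReal.ofReal s) u Ω ≠ ⊤) :
    ∃ c, ∫⁻ z in Ω, ‖u z - c‖ₑ ^ s ∂μ ≤ ENNReal.ofReal (3 ^ d) * (2 ^ (s - 1) *
      (μ Ω + (2 * ENNReal.ofReal (6 ^ d)) ^ s * ∫⁻ z in Ω, G z ^ s ∂μ)) *
        ballOscillation μ (ENNReal.ofReal s) u Ω ^ s := by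
  have hs0 : 0 ≤ s := by linarith
  set M := ballOscillation μ (ENNReal.ofReal s) u Ω
  set K : ℝ≥0∞ := 2 * ENNReal.ofReal (6 ^ d)
  set w : E → ℝ := fun z => ⨍ y in ball z (whitneyRadius Ω z), u y ∂μ
  have hw : WhitneyOscLE Ω w (K * M) := whitneyOscLE_setAverage μ hΩ hne (by simpa using hs) hu
  have hball : ∀ z ∈ Ω, ∫⁻ y, ‖u y - w z₀‖ₑ ^ s ∂μ[|ball z (whitneyRadius Ω z)] ≤
      2 ^ (s - 1) * (M ^ s + K ^ s * M ^ s * G z ^ s) := by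
    intro z hz
    have hr := whitneyRadius_pos hΩ hne hz
    have := isProbabilityMeasure_cond_ball μ z hr
    refine (lintegral_enorm_sub_rpow_le _ hs u (w z) _).trans ?_
    rw [← ENNReal.mul_rpow_of_nonneg _ _ hs0, ← ENNReal.mul_rpow_of_nonneg _ _ hs0]
    gcongr
    · exact eLpNorm_sub_setAverage_le_ballOscillation μ _ u hr (ball_whitneyRadius_subset hΩ hne hz)
    · exact hG hw z hz
  refine ⟨w z₀, ?_⟩
  calc ∫⁻ z in Ω, ‖u z - w z₀‖ₑ ^ s ∂μ
      ≤ ENNReal.ofReal (3 ^ d) *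
          ∫⁻ z in Ω, 2 ^ (s - 1) * (M ^ s + K ^ s * M ^ s * G z ^ s) ∂μ := by
        refine (lintegral_le_mul_lintegral_cond_ball_whitneyRadius μ hΩ hne
          ((hu.sub aestronglyMeasurable_const).enorm.pow_const s)).trans ?_
        gcongr 1
        exact setLIntegral_mono' hΩ.measurableSet hball
    _ = _ := by
        rw [lintegral_const_mul' _ _ (by finiteness), lintegral_add_left measurable_const,
          lintegral_const_mul' _ _ (by finiteness), setLIntegral_const]
        ring

theorem isLsAveragingDomain_of_whitneyChainBound {n : ℕ} {Ω : Set (EuclideanSpace ℝ (Fin n))}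
    (hΩ : IsOpen Ω) (hne : Ωᶜ.Nonempty) (h0 : volume Ω ≠ 0) (htop : volume Ω ≠ ⊤) {s : ℝ}
    (hs : 1 ≤ s) {z₀ : EuclideanSpace ℝ (Fin n)} {G : EuclideanSpace ℝ (Fin n) → ℝ≥0∞}
    (hG : WhitneyChainBound Ω z₀ G) (hGs : ∫⁻ z in Ω, G z ^ s ≠ ⊤) :
    IsLsAveragingDomain s Ω := by
  have hs0 : 0 < s := by linarith
  have := ProbabilityTheory.cond_isProbabilityMeasure_of_finite h0 htop
  obtain ⟨Q, hQ, hu⟩ : ∃ Q : ℝ≥0∞, Q ≠ ⊤ ∧ ∀ u : EuclideanSpace ℝ (Fin n) → ℝ,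
      AEStronglyMeasurable u (volume.restrict Ω) →
      ballOscillation volume (ENNReal.ofReal s) u Ω ≠ ⊤ →
      ∃ c, ∫⁻ z in Ω, ‖u z - c‖ₑ ^ s ≤ Q * ballOscillation volume (ENNReal.ofReal s) u Ω ^ s :=
    ⟨_, by finiteness, fun u => exists_lintegral_enorm_sub_rpow_le volume hΩ hne hs hG⟩
  refine (isLsAveragingDomain_iff hs0).2 ⟨2 * ((volume Ω)⁻¹ * Q) ^ (1 / s) + 1, ?_, fun u hu' => ?_⟩
  · have := ENNReal.inv_ne_top.2 h0
    finiteness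
  set M := ballOscillation volume (ENNReal.ofReal s) u Ω
  by_cases hM : M = ⊤
  · simp [hM]
  have hum := hu'.aestronglyMeasurable
  have hcond : AEStronglyMeasurable u volume[|Ω] := hum.smul_measure _
  obtain ⟨c, hc⟩ := hu u hum hM
  calc eLpNorm (fun z => u z - ⨍ y in Ω, u y) (ENNReal.ofReal s) volume[|Ω]
      ≤ 2 * eLpNorm (fun z => u z - c) (ENNReal.ofReal s) volume[|Ω] := by
        rw [setAverage_eq_integral_cond]
        exact eLpNorm_sub_integral_le (by simpa using hs) hcond c
    _ ≤ 2 * ((volume Ω)⁻¹ * (Q * M ^ s)) ^ (1 / s) := by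
        rw [eLpNorm_ofReal_eq_lintegral_rpow hs0, lintegral_cond]
        gcongr
    _ = 2 * ((volume Ω)⁻¹ * Q) ^ (1 / s) * M := by
        rw [← mul_assoc, ENNReal.mul_rpow_of_nonneg _ _ (by positivity), one_div,
          ENNReal.rpow_rpow_inv hs0.ne', mul_assoc]
    _ ≤ (2 * ((volume Ω)⁻¹ * Q) ^ (1 / s) + 1) * M := by
        gcongr
        exact le_self_add

end Whitney

section Chains

lemma exists_nat_one_add_le_pow_mul {θ φ δ : ℝ} (hθ : 0 < θ) (hθ1 : θ ≤ 1) (hφ : 0 < φ)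
    (hφ1 : φ ≤ 1) (hδ : 0 < δ) :
    ∃ N : ℕ, 1 + φ ≤ (1 + θ) ^ N * φ ∧
      (N : ℝ) ≤ (1 + 2 ^ (δ + 1) / δ) * (θ⁻¹ * φ ^ (-δ)) := by
  have hlogθ : θ / 2 ≤ Real.log (1 + θ) := by
    refine le_trans ?_ (Real.le_log_one_add_of_nonneg hθ.le)
    rw [div_le_div_iff₀ (by positivity) (by positivity)]
    nlinarith
  have hlogφ : Real.log (1 + φ⁻¹) ≤ 2 ^ δ * φ ^ (-δ) / δ := by
    have hφinv := (one_le_inv₀ hφ).2 hφ1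
    refine (Real.log_le_rpow_div (by positivity) hδ).trans ?_
    rw [Real.rpow_neg hφ.le, ← Real.inv_rpow hφ.le, ← Real.mul_rpow (by norm_num) (by positivity)]
    gcongr
    linarith
  have hratio : Real.log (1 + φ⁻¹) / Real.log (1 + θ) ≤
      2 ^ (δ + 1) / δ * (θ⁻¹ * φ ^ (-δ)) := by
    calc Real.log (1 + φ⁻¹) / Real.log (1 + θ) ≤ (2 ^ δ * φ ^ (-δ) / δ) / (θ / 2) := by gcongr
      _ = 2 ^ (δ + 1) / δ * (θ⁻¹ * φ ^ (-δ)) := by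
        rw [Real.rpow_add_one two_ne_zero]
        field_simp
  refine ⟨⌈Real.log (1 + φ⁻¹) / Real.log (1 + θ)⌉₊, ?_, ?_⟩
  · have hceil := Nat.le_ceil (Real.log (1 + φ⁻¹) / Real.log (1 + θ))
    rw [div_le_iff₀ (Real.log_pos (by linarith)), ← Real.log_pow,
      Real.log_le_log_iff (by positivity) (by positivity)] at hceil
    calc 1 + φ = (1 + φ⁻¹) * φ := by field_simp; ring
      _ ≤ _ := by gcongr
  · have hone : 1 ≤ θ⁻¹ * φ ^ (-δ) := one_le_mul_of_one_le_of_one_le ((one_le_inv₀ hθ).2 hθ1)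
      (Real.one_le_rpow_of_pos_of_le_one_of_nonpos hφ hφ1 (by linarith))
    have hceil := (Nat.ceil_lt_add_one (div_nonneg (Real.log_nonneg (by simp [hφ.le]))
      (Real.log_nonneg (by linarith)) : 0 ≤ Real.log (1 + φ⁻¹) / Real.log (1 + θ))).le
    linarith

variable {E : Type*} [SeminormedAddCommGroup E] [NormedSpace ℝ E] {Ω : Set E} {w : E → ℝ}
  {D : ℝ≥0∞} {z z₀ : E} {L θ φ : ℝ}

lemma edist_lineMap_le_mul_of_whitneyOscLE (hw : WhitneyOscLE Ω w D) (hL : 0 < L)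
    (hzL : dist z z₀ ≤ L) (hθ : 0 < θ) (hφ : 0 < φ)
    (hr : ∀ t ∈ Icc (0 : ℝ) 1, L * θ * (t + φ) ≤ whitneyRadius Ω (AffineMap.lineMap z z₀ t))
    (N : ℕ) {t : ℝ} (ht : t ∈ Icc (0 : ℝ) 1) (hN : 1 + φ ≤ (1 + θ) ^ N * (t + φ)) :
    edist (w (AffineMap.lineMap z z₀ t)) (w z₀) ≤ D * N := by
  induction N generalizing t with
  | zero =>
    obtain rfl : t = 1 := le_antisymm ht.2 (by simpa using hN)
    simp
  | succ N ih =>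
    set t' := min 1 (t + θ * (t + φ)) with ht'_def
    have hstep : 0 ≤ θ * (t + φ) := mul_nonneg hθ.le (by linarith [ht.1])
    have htt' : t ≤ t' := le_min ht.2 (by linarith)
    have ht' : t' ∈ Icc (0 : ℝ) 1 := ⟨ht.1.trans htt', min_le_left _ _⟩
    have hmem : ∀ τ ∈ Icc (0 : ℝ) 1, AffineMap.lineMap z z₀ τ ∈ Ω := fun τ hτ =>
      mem_of_whitneyRadius_pos (lt_of_lt_of_le
        (mul_pos (mul_pos hL hθ) (by linarith [hτ.1])) (hr τ hτ))
    have hdist : dist (AffineMap.lineMap z z₀ t : E) (AffineMap.lineMap z z₀ t') ≤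
        whitneyRadius Ω (AffineMap.lineMap z z₀ t) := by
      rw [dist_lineMap_lineMap, dist_comm t, Real.dist_eq, abs_of_nonneg (by linarith)]
      calc (t' - t) * dist z z₀ ≤ θ * (t + φ) * L := by
            gcongr
            linarith [min_le_right 1 (t + θ * (t + φ))]
        _ = L * θ * (t + φ) := by ring
        _ ≤ _ := hr t ht
    have hN' : 1 + φ ≤ (1 + θ) ^ N * (t' + φ) := by
      rcases min_choice 1 (t + θ * (t + φ)) with hmin | hmin
      · rw [ht'_def, hmin]
        exact le_mul_of_one_le_left (by positivity) (one_le_pow₀ (by linarith))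
      · rw [ht'_def, hmin]
        linear_combination hN
    calc edist (w (AffineMap.lineMap z z₀ t)) (w z₀)
        ≤ edist (w (AffineMap.lineMap z z₀ t)) (w (AffineMap.lineMap z z₀ t')) +
            edist (w (AffineMap.lineMap z z₀ t')) (w z₀) := edist_triangle _ _ _
      _ ≤ D + D * N := add_le_add (hw _ (hmem t ht) _ (hmem t' ht') hdist) (ih ht' hN')
      _ = D * (N + 1 : ℕ) := by push_cast; ring

lemma edist_le_mul_ofReal_of_whitneyOscLE (hw : WhitneyOscLE Ω w D) (hL : 0 < L)
    (hzL : dist z z₀ ≤ L) (hθ : 0 < θ) (hθ1 : θ ≤ 1) (hφ : 0 < φ) (hφ1 : φ ≤ 1)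
    (hr : ∀ t ∈ Icc (0 : ℝ) 1, L * θ * (t + φ) ≤ whitneyRadius Ω (AffineMap.lineMap z z₀ t))
    {δ : ℝ} (hδ : 0 < δ) :
    edist (w z) (w z₀) ≤
      D * ENNReal.ofReal ((1 + 2 ^ (δ + 1) / δ) * (θ⁻¹ * φ ^ (-δ))) := by
  obtain ⟨N, hN, hNle⟩ := exists_nat_one_add_le_pow_mul hθ hθ1 hφ hφ1 hδ
  have hchain := edist_lineMap_le_mul_of_whitneyOscLE hw hL hzL hθ hφ hr N (t := 0)
    (by simp) (by simpa using hN)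
  rw [AffineMap.lineMap_apply_zero] at hchain
  refine hchain.trans ?_
  gcongr
  rw [← ENNReal.ofReal_natCast]
  gcongr

end Chains

section NegativePowers

variable {X : Type*} [MeasurableSpace X] {μ : Measure X} {f g : X → ℝ}

lemma lintegral_ofReal_rpow_neg_eq (hf : AEMeasurable f μ) (hpos : ∀ᵐ x ∂μ, 0 < f x) {q : ℝ}
    (hq : 0 < q) :
    ∫⁻ x, ENNReal.ofReal (f x ^ (-q)) ∂μ = ∫⁻ t in Ioi (0 : ℝ), μ {x | f x < t ^ (-q)⁻¹} := by
  rw [lintegral_eq_lintegral_meas_lt μ (hpos.mono fun x hx => (Real.rpow_pos_of_pos hx _).le)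
    (hf.pow_const _)]
  refine setLIntegral_congr_fun measurableSet_Ioi fun t ht => measure_congr ?_
  filter_upwards [hpos] with x hx
  exact propext (Real.lt_rpow_inv_iff_of_neg hx ht (neg_lt_zero.2 hq)).symm

lemma lintegral_ofReal_rpow_neg_ne_top [IsFiniteMeasure μ] (hf : AEMeasurable f μ)
    (hpos : ∀ᵐ x ∂μ, 0 < f x) {p q : ℝ} {C : ℝ≥0∞} (hC : C ≠ ⊤)
    (hsub : ∀ t ∈ Ioo (0 : ℝ) 1, μ {x | f x < t} ≤ C * ENNReal.ofReal (t ^ p))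
    (hq : 0 < q) (hqp : q < p) : ∫⁻ x, ENNReal.ofReal (f x ^ (-q)) ∂μ ≠ ⊤ := by
  rw [lintegral_ofReal_rpow_neg_eq hf hpos hq, ← Ioc_union_Ioi_eq_Ioi zero_le_one]
  refine ne_top_of_le_ne_top (ENNReal.add_ne_top.2 ⟨?_, ?_⟩) (lintegral_union_le _ _ _)
  · refine ne_top_of_le_ne_top (b := ∫⁻ _ in Ioc (0 : ℝ) 1, μ univ) ?_
      (lintegral_mono fun t => measure_mono (subset_univ _))
    simp
  · have hintegrable : IntegrableOn (fun t : ℝ => t ^ (-q⁻¹ * p)) (Ioi 1) := by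
      refine integrableOn_Ioi_rpow_of_lt ?_ one_pos
      rw [neg_mul, neg_lt_neg_iff, ← div_eq_inv_mul, one_lt_div hq]
      exact hqp
    refine ne_top_of_le_ne_top (ENNReal.mul_ne_top hC hintegrable.setLIntegral_lt_top.ne) ?_
    rw [← lintegral_const_mul' _ _ hC]
    refine setLIntegral_mono' measurableSet_Ioi fun t ht => ?_
    have ht0 : (0 : ℝ) < t := one_pos.trans ht
    rw [Real.rpow_mul ht0.le, inv_neg]
    exact hsub _ ⟨by positivity, Real.rpow_lt_one_of_one_lt_of_neg ht (by simpa using hq)⟩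

lemma lintegral_ofReal_rpow_neg_eq_top (hf : AEMeasurable f μ) (hpos : ∀ᵐ x ∂μ, 0 < f x)
    {p q : ℝ} {c : ℝ≥0∞} (hc : c ≠ 0)
    (hsub : ∀ t ∈ Ioo (0 : ℝ) 1, c * ENNReal.ofReal (t ^ p) ≤ μ {x | f x < t})
    (hq : 0 < q) (hpq : p ≤ q) : ∫⁻ x, ENNReal.ofReal (f x ^ (-q)) ∂μ = ⊤ := by
  have hdiv : ∫⁻ t in Ioi (1 : ℝ), ENNReal.ofReal (t ^ (-q⁻¹ * p)) = ⊤ := by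
    by_contra h
    rw [← ne_eq, lintegral_ofReal_ne_top_iff_integrable
      (by fun_prop : Measurable fun t : ℝ => t ^ (-q⁻¹ * p)).aestronglyMeasurable
      ((ae_restrict_mem measurableSet_Ioi).mono fun t ht =>
        Real.rpow_nonneg (one_pos.trans ht).le _)] at h
    have := (integrableOn_Ioi_rpow_iff one_pos).1 h
    rw [neg_mul, neg_lt_neg_iff, ← div_eq_inv_mul, one_lt_div hq] at this
    linarith
  rw [lintegral_ofReal_rpow_neg_eq hf hpos hq, ← top_le_iff]
  calc ⊤ = c * ∫⁻ t in Ioi (1 : ℝ), ENNReal.ofReal (t ^ (-q⁻¹ * p)) := by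
        rw [hdiv, ENNReal.mul_top hc]
    _ = ∫⁻ t in Ioi (1 : ℝ), c * ENNReal.ofReal (t ^ (-q⁻¹ * p)) :=
        (lintegral_const_mul _ (by fun_prop)).symm
    _ ≤ ∫⁻ t in Ioi (1 : ℝ), μ {x | f x < t ^ (-q)⁻¹} := by
        refine setLIntegral_mono' measurableSet_Ioi fun t ht => ?_
        have ht0 : (0 : ℝ) < t := one_pos.trans ht
        rw [Real.rpow_mul ht0.le, inv_neg]
        exact hsub _ ⟨by positivity, Real.rpow_lt_one_of_one_lt_of_neg ht (by simpa using hq)⟩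
    _ ≤ _ := lintegral_mono_set (Ioi_subset_Ioi zero_le_one)

lemma exists_holderConjugate_mul_lt {p p' c : ℝ} (hp' : 0 < p') (hc : 0 ≤ c) (hcp : c < p) :
    ∃ θ θ' δ : ℝ, θ.HolderConjugate θ' ∧ 0 < δ ∧ (c + δ) * θ < p ∧ δ * θ' < p' := by
  have hp : 0 < p := hc.trans_lt hcp
  have hsub : 0 < p - c := sub_pos.2 hcp
  refine ⟨2 * p / (p + c), 2 * p / (p - c), min ((p - c) / 4) (p' * (p - c) / (4 * p)),
    ⟨?_, by positivity, by positivity⟩, by positivity, ?_, ?_⟩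
  · field_simp
    ring
  · rw [mul_div_assoc', div_lt_iff₀ (by positivity)]
    nlinarith [min_le_left ((p - c) / 4) (p' * (p - c) / (4 * p))]
  · calc min ((p - c) / 4) (p' * (p - c) / (4 * p)) * (2 * p / (p - c))
        ≤ p' * (p - c) / (4 * p) * (2 * p / (p - c)) := by
          gcongr
          exact min_le_right _ _
      _ = p' / 2 := by field_simp; ring
      _ < p' := half_lt_self hp'

lemma exists_lintegral_rpow_mul_rpow_ne_top [IsFiniteMeasure μ] (hf : AEMeasurable f μ)
    (hg : AEMeasurable g μ) (hfpos : ∀ᵐ x ∂μ, 0 < f x) (hgpos : ∀ᵐ x ∂μ, 0 < g x)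
    {p p' c : ℝ} {A B : ℝ≥0∞} (hA : A ≠ ⊤) (hB : B ≠ ⊤)
    (hfsub : ∀ t ∈ Ioo (0 : ℝ) 1, μ {x | f x < t} ≤ A * ENNReal.ofReal (t ^ p))
    (hgsub : ∀ t ∈ Ioo (0 : ℝ) 1, μ {x | g x < t} ≤ B * ENNReal.ofReal (t ^ p'))
    (hp' : 0 < p') (hc : 0 ≤ c) (hcp : c < p) :
    ∃ δ > 0, ∫⁻ x, ENNReal.ofReal (f x ^ (-(c + δ)) * g x ^ (-δ)) ∂μ ≠ ⊤ := by
  obtain ⟨θ, θ', δ, hconj, hδ, hδf, hδg⟩ := exists_holderConjugate_mul_lt hp' hc hcp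
  have hθ := hconj.pos
  have hθ' := hconj.symm.pos
  have hpow : ∀ (h : X → ℝ) (a τ : ℝ), (∀ᵐ x ∂μ, 0 < h x) → 0 < τ →
      ∫⁻ x, ENNReal.ofReal (h x ^ (-a)) ^ τ ∂μ = ∫⁻ x, ENNReal.ofReal (h x ^ (-(a * τ))) ∂μ := by
    intro h a τ hh hτ
    refine lintegral_congr_ae (hh.mono fun x hx => ?_)
    dsimp only
    rw [ENNReal.ofReal_rpow_of_nonneg (by positivity) hτ.le, ← Real.rpow_mul hx.le, neg_mul]
  refine ⟨δ, hδ, ne_top_of_le_ne_top ?_ (le_of_eq_of_le (lintegral_congr_ae ?_)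
    (ENNReal.lintegral_mul_le_Lp_mul_Lq μ hconj (hf.pow_const (-(c + δ))).ennreal_ofReal
      (hg.pow_const (-δ)).ennreal_ofReal))⟩
  · rw [hpow f _ θ hfpos hθ, hpow g _ θ' hgpos hθ']
    have hfin := lintegral_ofReal_rpow_neg_ne_top hf hfpos hA hfsub (by positivity) hδf
    have hfin' := lintegral_ofReal_rpow_neg_ne_top hg hgpos hB hgsub (by positivity) hδg
    finiteness
  · exact hfpos.mono fun x hx => ENNReal.ofReal_mul (by positivity)

end NegativePowers

section RealPowers

lemma rpow_add_mul_sub_le_rpow {α a b : ℝ} (hα : 1 ≤ α) (ha : 0 < a) (hb : 0 ≤ b) :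
    a ^ α + α * a ^ (α - 1) * (b - a) ≤ b ^ α := by
  have hbernoulli : 1 + α * (b / a - 1) ≤ (b / a) ^ α := by
    simpa using one_add_mul_self_le_rpow_one_add (s := b / a - 1)
      (by linarith [div_nonneg hb ha.le]) hα
  calc a ^ α + α * a ^ (α - 1) * (b - a) = a ^ α * (1 + α * (b / a - 1)) := by
        rw [Real.rpow_sub_one ha.ne']
        field_simp
    _ ≤ a ^ α * (b / a) ^ α := by gcongr
    _ = b ^ α := by rw [← Real.mul_rpow ha.le (by positivity), mul_div_cancel₀ _ ha.ne']

lemma rpow_sub_mul_le_rpow_sub {α β x r : ℝ} (hα : 0 ≤ α) (hβ : 1 ≤ β) (hαβ : α ≤ β) (hx : 0 < x)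
    (hr : 0 ≤ r) (hrx : r ≤ x) : x ^ α - β * x ^ (α - 1) * r ≤ (x - r) ^ α := by
  have hrx1 : r / x ≤ 1 := (div_le_one hx).2 hrx
  have hbernoulli : 1 - β * (r / x) ≤ (1 - r / x) ^ β := by
    simpa [sub_eq_add_neg] using one_add_mul_self_le_rpow_one_add (s := -(r / x))
      (by linarith) hβ
  have hexp : (1 - r / x) ^ β ≤ (1 - r / x) ^ α :=
    Real.rpow_le_rpow_of_exponent_ge' (by linarith) (by linarith [div_nonneg hr hx.le]) hα hαβ
  calc x ^ α - β * x ^ (α - 1) * r = x ^ α * (1 - β * (r / x)) := by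
        rw [Real.rpow_sub_one hx.ne']
        field_simp
    _ ≤ x ^ α * (1 - r / x) ^ α := by gcongr; exact hbernoulli.trans hexp
    _ = (x - r) ^ α := by
        rw [← Real.mul_rpow hx.le (by linarith), mul_sub, mul_one, mul_div_cancel₀ _ hx.ne']

end RealPowers

lemma le_infDist_compl_of_ball_subset {X : Type*} [PseudoMetricSpace X] {Ω : Set X}
    (hne : Ωᶜ.Nonempty) {z : X} {r : ℝ} (h : ball z r ⊆ Ω) : r ≤ infDist z Ωᶜ :=
  (le_infDist hne).2 fun y hy => by
    by_contra! hlt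
    exact hy (h (by rwa [mem_ball']))

lemma ball_lineMap_subset_of_convex {E : Type*} [SeminormedAddCommGroup E] [NormedSpace ℝ E]
    {C : Set E} (hC : Convex ℝ C) {z w : E} {a b t : ℝ} (ha : 0 < a) (hb : 0 < b)
    (ht : t ∈ Icc (0 : ℝ) 1) (hz : ball z a ⊆ C) (hw : ball w b ⊆ C) :
    ball (AffineMap.lineMap z w t) ((1 - t) * a + t * b) ⊆ C := by
  intro v hv
  set R := (1 - t) * a + t * b with hR
  set δ := v - AffineMap.lineMap z w t with hδ
  have hRpos : 0 < R := dist_nonneg.trans_lt hv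
  have hδR : ‖δ‖ < R := by rwa [hδ, ← dist_eq_norm]
  have hshift : ∀ (p : E) (c : ℝ), 0 < c → p + (c / R) • δ ∈ ball p c := by
    intro p c hc
    rw [mem_ball_iff_norm, add_sub_cancel_left, norm_smul, Real.norm_of_nonneg (by positivity),
      div_mul_eq_mul_div, div_lt_iff₀ hRpos]
    gcongr
  have hcomb := hC (hz (hshift z a ha)) (hw (hshift w b hb)) (sub_nonneg.2 ht.2) ht.1
    (sub_add_cancel 1 t)
  have hcoeff : (1 - t) * (a / R) + t * (b / R) = 1 := by
    field_simp
    exact hR.symm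
  have hv_eq : v = AffineMap.lineMap z w t + ((1 - t) * (a / R) + t * (b / R)) • δ := by
    rw [hcoeff, one_smul, hδ, add_sub_cancel]
  convert hcomb using 1
  clear_value δ R
  rw [hv_eq, AffineMap.lineMap_apply_module]
  module

lemma abs_apply_sub_apply_le_dist {n : ℕ} (i : Fin n)
    (z w : EuclideanSpace ℝ (Fin n)) :
    |z i - w i| ≤ dist z w := by
  rw [dist_eq_norm]
  exact PiLp.norm_apply_le (p := 2) (z - w) i

section Radial

variable {n : ℕ} [NeZero n]

lemma radial_eq_norm_sub_single (z : EuclideanSpace ℝ (Fin n)) :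
    radial z = ‖z - EuclideanSpace.single 0 (z 0)‖ := by
  rw [radial, EuclideanSpace.norm_eq, ← Finset.add_sum_erase _ _ (Finset.mem_univ (0 : Fin n))]
  congr 1
  rw [PiLp.sub_apply, PiLp.single_apply, if_pos rfl, sub_self, norm_zero, zero_pow two_ne_zero,
    zero_add]
  refine Finset.sum_congr rfl fun i hi => ?_
  simp [Finset.ne_of_mem_erase hi]

lemma radial_nonneg (z : EuclideanSpace ℝ (Fin n)) : 0 ≤ radial z :=
  Real.sqrt_nonneg _

lemma continuous_radial : Continuous (radial : EuclideanSpace ℝ (Fin n) → ℝ) := by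
  unfold radial
  fun_prop

lemma radial_add_le (z w : EuclideanSpace ℝ (Fin n)) : radial (z + w) ≤ radial z + radial w := by
  simp only [radial_eq_norm_sub_single]
  refine le_of_eq_of_le (congrArg _ ?_) (norm_add_le _ _)
  ext i
  by_cases h : i = 0 <;> simp [h]

lemma radial_smul (c : ℝ) (z : EuclideanSpace ℝ (Fin n)) : radial (c • z) = |c| * radial z := by
  rw [radial_eq_norm_sub_single, radial_eq_norm_sub_single, ← Real.norm_eq_abs, ← norm_smul]
  congr 1
  ext i
  by_cases h : i = 0 <;> simp [h]

lemma radial_single_zero (x : ℝ) : radial (EuclideanSpace.single (0 : Fin n) x) = 0 := by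
  simp [radial_eq_norm_sub_single]

lemma radial_le_norm (z : EuclideanSpace ℝ (Fin n)) : radial z ≤ ‖z‖ := by
  rw [radial, EuclideanSpace.norm_eq]
  refine Real.sqrt_le_sqrt ?_
  simp only [Real.norm_eq_abs, sq_abs]
  exact Finset.sum_le_sum_of_subset_of_nonneg (Finset.erase_subset _ _) fun i _ _ => sq_nonneg _

lemma radial_le_radial_add_dist (z w : EuclideanSpace ℝ (Fin n)) :
    radial w ≤ radial z + dist w z := by
  have hadd := radial_add_le z (w - z)
  have hnorm := radial_le_norm (w - z)
  rw [add_sub_cancel] at hadd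
  rw [← dist_eq_norm] at hnorm
  linarith

lemma norm_le_abs_add_radial (z : EuclideanSpace ℝ (Fin n)) : ‖z‖ ≤ |z 0| + radial z := by
  rw [radial_eq_norm_sub_single]
  simpa using norm_le_norm_add_norm_sub' z (EuclideanSpace.single (0 : Fin n) (z 0))

end Radial

section CuspDomain

variable {n : ℕ} [NeZero n] {α : ℝ}

lemma isOpen_cuspDomain (hα : 0 ≤ α) : IsOpen (cuspDomain n α) := by
  have hcoord : Continuous fun z : EuclideanSpace ℝ (Fin n) => z 0 := by fun_prop
  exact (isOpen_lt continuous_const hcoord).inter <| (isOpen_lt hcoord continuous_const).inter <|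
    isOpen_lt continuous_radial (hcoord.rpow_const fun _ => Or.inr hα)

lemma norm_lt_two_of_mem_cuspDomain (hα : 0 ≤ α) {z : EuclideanSpace ℝ (Fin n)}
    (hz : z ∈ cuspDomain n α) : ‖z‖ < 2 := by
  obtain ⟨hz0, hz1, hzr⟩ := hz
  have hnorm := norm_le_abs_add_radial z
  rw [abs_of_pos hz0] at hnorm
  linarith [Real.rpow_le_one hz0.le hz1.le hα]

lemma single_mem_cuspDomain {x : ℝ} (hx : 0 < x) (hx1 : x < 1) :
    EuclideanSpace.single (0 : Fin n) x ∈ cuspDomain n α := by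
  refine ⟨by simpa using hx, by simpa using hx1, ?_⟩
  rw [radial_single_zero]
  simpa using Real.rpow_pos_of_pos hx α

lemma nonempty_compl_cuspDomain : (cuspDomain n α)ᶜ.Nonempty :=
  ⟨0, fun h => by simpa using h.1⟩

lemma volume_cuspDomain_ne_top (hα : 0 ≤ α) : volume (cuspDomain n α) ≠ ⊤ :=
  measure_ne_top_of_subset
    (fun _ hz => mem_ball_zero_iff.2 (norm_lt_two_of_mem_cuspDomain hα hz))
    (measure_ball_lt_top (x := 0)).ne

lemma volume_cuspDomain_ne_zero (hα : 0 ≤ α) : volume (cuspDomain n α) ≠ 0 :=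
  ((isOpen_cuspDomain hα).measure_pos _ ⟨_, single_mem_cuspDomain one_half_pos one_half_lt_one⟩).ne'

lemma convex_cuspDomain (hα : 0 ≤ α) (hα1 : α ≤ 1) : Convex ℝ (cuspDomain n α) := by
  rintro z ⟨hz0, hz1, hzr⟩ w ⟨hw0, hw1, hwr⟩ a b ha hb hab
  have hconcave := (Real.concaveOn_rpow hα hα1).2 (mem_Ici.2 hz0.le) (mem_Ici.2 hw0.le) ha hb hab
  have hradial : radial (a • z + b • w) ≤ a * radial z + b * radial w := by
    simpa only [radial_smul, abs_of_nonneg ha, abs_of_nonneg hb] using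
      radial_add_le (a • z) (b • w)
  have hcoord : (a • z + b • w) 0 = a * z 0 + b * w 0 := by simp
  simp only [smul_eq_mul] at hconcave
  obtain rfl | ha' := ha.eq_or_lt
  · obtain rfl : b = 1 := by linarith
    simpa using ⟨hw0, hw1, hwr⟩
  · refine ⟨?_, ?_, ?_⟩ <;> rw [hcoord] <;> nlinarith

lemma ball_subset_cuspDomain {β r : ℝ} (hα : 0 ≤ α) (hβ : 1 ≤ β) (hαβ : α ≤ β)
    {z : EuclideanSpace ℝ (Fin n)} (hz : 0 < z 0) (hr : r ≤ 1 - z 0)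
    (hradial : radial z + (1 + β * z 0 ^ (α - 1)) * r ≤ z 0 ^ α) :
    ball z r ⊆ cuspDomain n α := by
  intro w hw
  have hr0 : 0 < r := dist_nonneg.trans_lt hw
  have hcoord := abs_lt.1 ((abs_apply_sub_apply_le_dist 0 w z).trans_lt hw)
  have hpow : 0 < z 0 ^ (α - 1) := Real.rpow_pos_of_pos hz _
  have hrz : r < z 0 := by
    have hsplit : z 0 ^ α = z 0 ^ (α - 1) * z 0 := by
      rw [Real.rpow_sub_one hz.ne', div_mul_cancel₀ _ hz.ne']
    refine lt_of_mul_lt_mul_left ?_ hpow.le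
    have := mul_le_mul_of_nonneg_right hβ (mul_pos hpow hr0).le
    linarith [radial_nonneg z]
  have hw0 : z 0 - r < w 0 := by linarith
  refine ⟨by linarith, by linarith, ?_⟩
  calc radial w ≤ radial z + dist w z := radial_le_radial_add_dist z w
    _ < radial z + r := by gcongr; exact hw
    _ ≤ z 0 ^ α - β * z 0 ^ (α - 1) * r := by linarith
    _ ≤ (z 0 - r) ^ α := rpow_sub_mul_le_rpow_sub hα hβ hαβ hz hr0.le hrz.le
    _ ≤ w 0 ^ α := Real.rpow_le_rpow (by linarith) hw0.le hα

/-- How deep `z` lies inside the cusp domain, relative to the width `z 0 ^ α` of the domain at `z`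
and measured away from the tip: the points of depth more than `1 - l` are the image of the domain
under scaling the axis by `l` and the cross-sections accordingly. -/
noncomputable def cuspDepth (α : ℝ) (z : EuclideanSpace ℝ (Fin n)) : ℝ :=
  min (1 - z 0) (1 - radial z / z 0 ^ α)

lemma cuspDepth_le_one_sub (z : EuclideanSpace ℝ (Fin n)) : cuspDepth α z ≤ 1 - z 0 :=
  min_le_left _ _

lemma radial_le_one_sub_cuspDepth_mul {z : EuclideanSpace ℝ (Fin n)} (hz : 0 < z 0) :
    radial z ≤ (1 - cuspDepth α z) * z 0 ^ α := by
  rw [← div_le_iff₀ (Real.rpow_pos_of_pos hz α)]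
  linarith [min_le_right (1 - z 0) (1 - radial z / z 0 ^ α), cuspDepth.eq_1 α z]

lemma cuspDepth_pos {z : EuclideanSpace ℝ (Fin n)} (hz : z ∈ cuspDomain n α) :
    0 < cuspDepth α z :=
  lt_min (sub_pos.2 hz.2.1)
    (sub_pos.2 ((div_lt_one (Real.rpow_pos_of_pos hz.1 α)).2 hz.2.2))

lemma cuspDepth_mul_pos {z : EuclideanSpace ℝ (Fin n)} (hz : z ∈ cuspDomain n α) :
    0 < cuspDepth α z * z 0 :=
  mul_pos (cuspDepth_pos hz) hz.1

lemma cuspDepth_mul_le_one_sub {z : EuclideanSpace ℝ (Fin n)} (hz : z ∈ cuspDomain n α) :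
    cuspDepth α z * z 0 ≤ 1 - z 0 :=
  (mul_le_of_le_one_right (cuspDepth_pos hz).le hz.2.1.le).trans (cuspDepth_le_one_sub z)

lemma cuspDepth_mul_le_one {z : EuclideanSpace ℝ (Fin n)} (hz : z ∈ cuspDomain n α) :
    cuspDepth α z * z 0 ≤ 1 :=
  (cuspDepth_mul_le_one_sub hz).trans (sub_le_self _ hz.1.le)

lemma cuspDepth_single {x : ℝ} (hx : 0 ≤ x) :
    cuspDepth α (EuclideanSpace.single (0 : Fin n) x) = 1 - x := by
  simp [cuspDepth, radial_single_zero, hx]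

lemma ball_cuspDepth_subset (hα : 0 ≤ α) (hα1 : α ≤ 1) {z : EuclideanSpace ℝ (Fin n)}
    (hz : z ∈ cuspDomain n α) : ball z (cuspDepth α z * z 0 / 2) ⊆ cuspDomain n α := by
  have hdepth := cuspDepth_pos hz
  have hdepth_le := cuspDepth_le_one_sub (α := α) z
  obtain ⟨hz0, hz1, -⟩ := hz
  refine ball_subset_cuspDomain hα le_rfl hα1 hz0 (by nlinarith) ?_
  have hz_le : z 0 ≤ z 0 ^ α := by
    simpa using Real.rpow_le_rpow_of_exponent_ge hz0 hz1.le hα1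
  have hsplit : z 0 ^ (α - 1) * z 0 = z 0 ^ α := by
    rw [Real.rpow_sub_one hz0.ne', div_mul_cancel₀ _ hz0.ne']
  calc radial z + (1 + 1 * z 0 ^ (α - 1)) * (cuspDepth α z * z 0 / 2)
      = radial z + cuspDepth α z * (z 0 + z 0 ^ (α - 1) * z 0) / 2 := by ring
    _ ≤ (1 - cuspDepth α z) * z 0 ^ α + cuspDepth α z * (z 0 ^ α + z 0 ^ α) / 2 := by
      rw [hsplit]
      gcongr
      exact radial_le_one_sub_cuspDepth_mul hz0
    _ = z 0 ^ α := by ring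

lemma add_cuspDepth_mul_le_infDist_of_le_one (hα : 0 ≤ α) (hα1 : α ≤ 1)
    {z : EuclideanSpace ℝ (Fin n)} (hz : z ∈ cuspDomain n α) {t : ℝ} (ht : t ∈ Icc (0 : ℝ) 1) :
    (t + cuspDepth α z * z 0) / 16 ≤
      infDist (AffineMap.lineMap z (EuclideanSpace.single 0 (1 / 2)) t) (cuspDomain n α)ᶜ := by
  have hcenter : EuclideanSpace.single (0 : Fin n) (1 / 2 : ℝ) ∈ cuspDomain n α :=
    single_mem_cuspDomain one_half_pos one_half_lt_one
  have hball := ball_cuspDepth_subset hα hα1 hcenter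
  rw [cuspDepth_single one_half_pos.le, PiLp.single_apply, if_pos rfl] at hball
  have hmul_pos := cuspDepth_mul_pos hz
  refine le_trans ?_ (le_infDist_compl_of_ball_subset nonempty_compl_cuspDomain
    (ball_lineMap_subset_of_convex (convex_cuspDomain hα hα1) (half_pos hmul_pos) (by norm_num) ht
      (ball_cuspDepth_subset hα hα1 hz) hball))
  linarith [mul_nonneg hmul_pos.le (sub_nonneg.2 ht.2),
    mul_nonneg ht.1 (sub_nonneg.2 (cuspDepth_mul_le_one hz))]

lemma lineMap_single_apply_zero (z : EuclideanSpace ℝ (Fin n)) (x t : ℝ) :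
    AffineMap.lineMap z (EuclideanSpace.single 0 x) t 0 = (1 - t) * z 0 + t * x := by
  simp [AffineMap.lineMap_apply_module]

lemma radial_lineMap_single_le (z : EuclideanSpace ℝ (Fin n)) (x : ℝ) {t : ℝ} (ht : t ≤ 1) :
    radial (AffineMap.lineMap z (EuclideanSpace.single 0 x) t) ≤ (1 - t) * radial z := by
  rw [AffineMap.lineMap_apply_module]
  refine (radial_add_le _ _).trans_eq ?_
  rw [radial_smul, radial_smul, radial_single_zero, mul_zero, add_zero,
    abs_of_nonneg (sub_nonneg.2 ht)]

lemma rpow_mul_le_rpow_sub_radial_lineMap (hα : 1 ≤ α) {z : EuclideanSpace ℝ (Fin n)}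
    (hz : z ∈ cuspDomain n α) {t : ℝ} (ht : t ∈ Icc (0 : ℝ) 1)
    {P : EuclideanSpace ℝ (Fin n)}
    (hP : P = AffineMap.lineMap z (EuclideanSpace.single 0 (1 - 1 / (2 * α))) t) :
    z 0 ^ (α - 1) * (t / 2 + (1 - t) * (cuspDepth α z * z 0)) ≤ P 0 ^ α - radial P := by
  have hP0 : P 0 = (1 - t) * z 0 + t * (1 - 1 / (2 * α)) := by
    rw [hP, lineMap_single_apply_zero]
  have hz0 := hz.1
  have hsplit : z 0 ^ α = z 0 ^ (α - 1) * z 0 := by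
    rw [Real.rpow_sub_one hz0.ne', div_mul_cancel₀ _ hz0.ne']
  have hP_nonneg : 0 ≤ P 0 := by
    have : 1 / (2 * α) ≤ 1 := (div_le_one (by linarith)).2 (by linarith)
    rw [hP0]
    exact add_nonneg (mul_nonneg (sub_nonneg.2 ht.2) hz0.le) (mul_nonneg ht.1 (by linarith))
  have htangent := rpow_add_mul_sub_le_rpow hα hz0 hP_nonneg
  have hradial : radial P ≤ (1 - t) * ((1 - cuspDepth α z) * z 0 ^ α) := by
    rw [hP]
    refine (radial_lineMap_single_le _ _ ht.2).trans ?_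
    gcongr
    · exact sub_nonneg.2 ht.2
    · exact radial_le_one_sub_cuspDepth_mul hz0
  have hslope : t / 2 ≤ t * (z 0 + α * (1 - 1 / (2 * α) - z 0)) := by
    have : α * (1 - 1 / (2 * α) - z 0) = α - 1 / 2 - α * z 0 := by
      field_simp
    rw [this]
    nlinarith [mul_nonneg ht.1 (mul_nonneg (sub_nonneg.2 hα) (sub_nonneg.2 hz.2.1.le))]
  calc z 0 ^ (α - 1) * (t / 2 + (1 - t) * (cuspDepth α z * z 0))
      ≤ z 0 ^ (α - 1) * (t * (z 0 + α * (1 - 1 / (2 * α) - z 0)) +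
          (1 - t) * (cuspDepth α z * z 0)) := by
        gcongr
    _ = z 0 ^ α + α * z 0 ^ (α - 1) * (P 0 - z 0) -
          (1 - t) * ((1 - cuspDepth α z) * z 0 ^ α) := by
        rw [hP0, hsplit]
        ring
    _ ≤ P 0 ^ α - radial P := sub_le_sub htangent hradial

lemma add_div_two_le_one_sub_mul_add {e t : ℝ} (he : e ∈ Icc (0 : ℝ) 1) (ht : t ∈ Icc (0 : ℝ) 1) :
    (t + e) / 2 ≤ (1 - t) * e + t := by
  linarith [mul_nonneg (sub_nonneg.2 ht.2) he.1, mul_nonneg ht.1 (sub_nonneg.2 he.2)]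

lemma mul_le_one_sub_lineMap_single_apply_zero {z : EuclideanSpace ℝ (Fin n)}
    (hz : z ∈ cuspDomain n α) {x t : ℝ} (hx : x ∈ Icc (0 : ℝ) 1) (ht : t ∈ Icc (0 : ℝ) 1) :
    (1 - x) * ((t + cuspDepth α z * z 0) / 2) ≤
      1 - AffineMap.lineMap z (EuclideanSpace.single 0 x) t 0 := by
  have he := (cuspDepth_mul_pos hz).le
  calc (1 - x) * ((t + cuspDepth α z * z 0) / 2)
      ≤ (1 - x) * ((1 - t) * (cuspDepth α z * z 0) + t) :=
        mul_le_mul_of_nonneg_left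
          (add_div_two_le_one_sub_mul_add ⟨he, cuspDepth_mul_le_one hz⟩ ht) (sub_nonneg.2 hx.2)
    _ ≤ 1 * ((1 - t) * (1 - z 0)) + (1 - x) * t := by
        rw [mul_add]
        refine add_le_add (mul_le_mul (by linarith [hx.1]) ?_ ?_ zero_le_one) le_rfl
        · exact mul_le_mul_of_nonneg_left (cuspDepth_mul_le_one_sub hz) (sub_nonneg.2 ht.2)
        · exact mul_nonneg (sub_nonneg.2 ht.2) he
    _ = 1 - AffineMap.lineMap z (EuclideanSpace.single 0 x) t 0 := by
        rw [lineMap_single_apply_zero]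
        ring

lemma lineMap_single_apply_zero_pos {z : EuclideanSpace ℝ (Fin n)} (hz : 0 < z 0) {x t : ℝ}
    (hx : 0 < x) (ht : t ∈ Icc (0 : ℝ) 1) :
    0 < AffineMap.lineMap z (EuclideanSpace.single 0 x) t 0 := by
  rw [lineMap_single_apply_zero]
  exact convex_Ioi (0 : ℝ) hz hx (sub_nonneg.2 ht.2) ht.1 (sub_add_cancel 1 t)

lemma add_cuspDepth_mul_le_infDist_of_one_le (hα : 1 ≤ α) {z : EuclideanSpace ℝ (Fin n)}
    (hz : z ∈ cuspDomain n α) {t : ℝ} (ht : t ∈ Icc (0 : ℝ) 1) :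
    z 0 ^ (α - 1) * (t + cuspDepth α z * z 0) / (8 * α * (1 + α)) ≤
      infDist (AffineMap.lineMap z (EuclideanSpace.single 0 (1 - 1 / (2 * α))) t)
        (cuspDomain n α)ᶜ := by
  obtain ⟨P, hP⟩ : ∃ P, P = AffineMap.lineMap z (EuclideanSpace.single 0 (1 - 1 / (2 * α))) t :=
    ⟨_, rfl⟩
  have hη0 : 0 < 1 / (2 * α) := by positivity
  have hη : 1 / (2 * α) ≤ 1 / 2 := by
    gcongr
    linarith
  have hPpos := lineMap_single_apply_zero_pos hz.1 (x := 1 - 1 / (2 * α)) (by linarith) ht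
  have hPtop := mul_le_one_sub_lineMap_single_apply_zero hz (x := 1 - 1 / (2 * α))
    ⟨by linarith, by linarith⟩ ht
  have hgap := rpow_mul_le_rpow_sub_radial_lineMap hα hz ht hP
  have he := cuspDepth_mul_pos hz
  have hmid := add_div_two_le_one_sub_mul_add ⟨he.le, cuspDepth_mul_le_one hz⟩ ht
  rw [← hP, sub_sub_cancel] at hPtop
  rw [← hP] at hPpos ⊢
  set e := cuspDepth α z * z 0
  set q := z 0 ^ (α - 1)
  have hte : 0 < t + e := add_pos_of_nonneg_of_pos ht.1 he
  have hq : 0 < q := Real.rpow_pos_of_pos hz.1 _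
  have hq1 : q ≤ 1 := Real.rpow_le_one hz.1.le hz.2.1.le (sub_nonneg.2 hα)
  have hP1 : P 0 ^ (α - 1) ≤ 1 :=
    Real.rpow_le_one hPpos.le (by linarith [mul_pos hη0 (half_pos hte)]) (sub_nonneg.2 hα)
  have hscale : (1 + α) * (q * (t + e) / (8 * α * (1 + α))) =
      1 / (2 * α) * (q * ((t + e) / 4)) := by
    field_simp
    norm_num
  refine le_infDist_compl_of_ball_subset nonempty_compl_cuspDomain
    (ball_subset_cuspDomain (by linarith) hα le_rfl hPpos ?_ ?_)
  · refine le_trans ?_ hPtop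
    calc q * (t + e) / (8 * α * (1 + α)) ≤ 1 * (t + e) / (8 * α * (1 / 2)) := by gcongr; linarith
      _ = 1 / (2 * α) * ((t + e) / 2) := by field_simp; norm_num
  · calc radial P + (1 + α * P 0 ^ (α - 1)) * (q * (t + e) / (8 * α * (1 + α)))
        ≤ radial P + (1 + α * 1) * (q * (t + e) / (8 * α * (1 + α))) := by gcongr
      _ = radial P + 1 / (2 * α) * (q * ((t + e) / 4)) := by rw [mul_one, hscale]
      _ ≤ radial P + 1 * (q * (t / 2 + (1 - t) * e)) := by
          gcongr
          · linarith
          · linarith [mul_nonneg (sub_nonneg.2 ht.2) he.le]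
      _ ≤ P 0 ^ α := by linarith

lemma exists_forall_mul_add_cuspDepth_mul_le_infDist (hα : 0 ≤ α) :
    ∃ z₀ ∈ cuspDomain n α, ∃ κ > 0, ∀ z ∈ cuspDomain n α, ∀ t ∈ Icc (0 : ℝ) 1,
      κ * (z 0 ^ (max α 1 - 1) * (t + cuspDepth α z * z 0)) ≤
        infDist (AffineMap.lineMap z z₀ t) (cuspDomain n α)ᶜ := by
  rcases le_total α 1 with hα1 | hα1
  · refine ⟨_, single_mem_cuspDomain one_half_pos one_half_lt_one, 1 / 16, by norm_num, ?_⟩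
    intro z hz t ht
    rw [max_eq_right hα1, sub_self, Real.rpow_zero]
    refine le_of_eq_of_le ?_ (add_cuspDepth_mul_le_infDist_of_le_one hα hα1 hz ht)
    ring
  · have hη0 : 0 < 1 / (2 * α) := by positivity
    have hη1 : 1 / (2 * α) < 1 := (div_lt_one (by linarith)).2 (by linarith)
    refine ⟨_, single_mem_cuspDomain (sub_pos.2 hη1) (sub_lt_self 1 hη0),
      1 / (8 * α * (1 + α)), by positivity, ?_⟩
    intro z hz t ht
    rw [max_eq_left hα1]
    refine le_of_eq_of_le ?_ (add_cuspDepth_mul_le_infDist_of_one_le hα1 hz ht)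
    ring

lemma exists_whitneyChainBound_cuspDomain (hα : 0 ≤ α) {δ : ℝ} (hδ : 0 < δ) :
    ∃ z₀, ∃ C ≠ ∞, WhitneyChainBound (cuspDomain n α) z₀ fun z =>
      C * ENNReal.ofReal (z 0 ^ (-(max α 1 - 1 + δ)) * cuspDepth α z ^ (-δ)) := by
  obtain ⟨z₀, hz₀, κ, hκ, hinfDist⟩ :=
    exists_forall_mul_add_cuspDepth_mul_le_infDist (n := n) hα
  set κ' := min κ 1 / 16
  have hκ' : 0 < κ' := by positivity
  have hκ'1 : κ' ≤ 1 := (div_le_self (by positivity) (by norm_num)).trans (min_le_right κ 1)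
  refine ⟨z₀, ENNReal.ofReal ((1 + 2 ^ (δ + 1) / δ) * κ'⁻¹), ENNReal.ofReal_ne_top,
    fun w D hw z hz => ?_⟩
  have hdist : dist z z₀ ≤ 4 := by
    linarith [dist_le_norm_add_norm z z₀, norm_lt_two_of_mem_cuspDomain hα hz,
      norm_lt_two_of_mem_cuspDomain hα hz₀]
  have hpow : 0 < z 0 ^ (max α 1 - 1) := Real.rpow_pos_of_pos hz.1 _
  have hpow1 : z 0 ^ (max α 1 - 1) ≤ 1 :=
    Real.rpow_le_one hz.1.le hz.2.1.le (sub_nonneg.2 (le_max_right _ _))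
  have hbound := edist_le_mul_ofReal_of_whitneyOscLE hw four_pos hdist (mul_pos hκ' hpow)
    (mul_le_one₀ hκ'1 hpow.le hpow1) (cuspDepth_mul_pos hz) (cuspDepth_mul_le_one hz) ?_ hδ
  · refine hbound.trans_eq ?_
    beta_reduce
    rw [← ENNReal.ofReal_mul (by positivity), mul_inv,
      Real.mul_rpow (cuspDepth_pos hz).le hz.1.le, neg_add, Real.rpow_add hz.1,
      Real.rpow_neg hz.1.le (max α 1 - 1)]
    congr 2
    ring
  · intro t ht
    have hnonneg : 0 ≤ z 0 ^ (max α 1 - 1) * (t + cuspDepth α z * z 0) :=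
      mul_nonneg hpow.le (add_nonneg ht.1 (cuspDepth_mul_pos hz).le)
    calc 4 * (κ' * z 0 ^ (max α 1 - 1)) * (t + cuspDepth α z * z 0)
        = min κ 1 * (z 0 ^ (max α 1 - 1) * (t + cuspDepth α z * z 0)) / 4 := by ring
      _ ≤ κ * (z 0 ^ (max α 1 - 1) * (t + cuspDepth α z * z 0)) / 4 := by
        gcongr
        exact min_le_left _ _
      _ ≤ whitneyRadius (cuspDomain n α) (AffineMap.lineMap z z₀ t) :=
        div_le_div_of_nonneg_right (hinfDist z hz t ht) four_pos.le

end CuspDomain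

section Volume

variable {n : ℕ} [NeZero n] {α : ℝ}

/-- The linear map scaling the first coordinate by `a` and all the others by `b`. -/
noncomputable def axialScaling (n : ℕ) [NeZero n] (a b : ℝ) :
    EuclideanSpace ℝ (Fin n) →ₗ[ℝ] EuclideanSpace ℝ (Fin n) :=
  Matrix.toEuclideanLin (Matrix.diagonal fun i => if i = 0 then a else b)

lemma axialScaling_apply (a b : ℝ) (z : EuclideanSpace ℝ (Fin n)) (i : Fin n) :
    axialScaling n a b z i = (if i = 0 then a else b) * z i := by
  simp [axialScaling, Matrix.toLpLin_apply, Matrix.mulVec_diagonal]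

lemma det_axialScaling (a b : ℝ) : LinearMap.det (axialScaling n a b) = a * b ^ (n - 1) := by
  rw [axialScaling, Matrix.toEuclideanLin_eq_toLin_orthonormal, LinearMap.det_toLin,
    Matrix.det_diagonal, ← Finset.mul_prod_erase _ _ (Finset.mem_univ (0 : Fin n)), if_pos rfl,
    Finset.prod_congr rfl fun i hi => if_neg (Finset.ne_of_mem_erase hi)]
  simp

lemma radial_axialScaling (a : ℝ) {b : ℝ} (hb : 0 ≤ b) (z : EuclideanSpace ℝ (Fin n)) :
    radial (axialScaling n a b z) = b * radial z := by
  rw [← abs_of_nonneg hb, ← radial_smul, radial, radial]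
  congr 1
  refine Finset.sum_congr rfl fun i hi => ?_
  simp [axialScaling_apply, Finset.ne_of_mem_erase hi, abs_of_nonneg hb]

lemma volume_setOf_lt_and_radial_lt {l m : ℝ} (hl : 0 < l) (hm : 0 < m) :
    volume {z : EuclideanSpace ℝ (Fin n) | 0 < z 0 ∧ z 0 < l ∧ radial z < m * z 0 ^ α} =
      ENNReal.ofReal (l ^ (1 + α * (n - 1)) * m ^ ((n : ℝ) - 1)) * volume (cuspDomain n α) := by
  have hlα : 0 < m * l ^ α := by positivity
  have hpreimage : {z | 0 < z 0 ∧ z 0 < l ∧ radial z < m * z 0 ^ α} =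
      axialScaling n l⁻¹ (m * l ^ α)⁻¹ ⁻¹' cuspDomain n α := by
    ext z
    simp only [cuspDomain, mem_preimage, mem_ofPred_eq, axialScaling_apply, if_pos,
      radial_axialScaling _ (inv_pos.2 hlα).le, inv_mul_lt_one₀ hl, inv_mul_lt_iff₀ hlα,
      mul_pos_iff_of_pos_left (inv_pos.2 hl)]
    refine and_congr_right fun hz => ?_
    rw [Real.mul_rpow (inv_pos.2 hl).le hz.le, Real.inv_rpow hl.le, mul_assoc,
      mul_inv_cancel_left₀ (by positivity)]
  have hn : ((n - 1 : ℕ) : ℝ) = n - 1 := by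
    rw [Nat.cast_sub (NeZero.one_le), Nat.cast_one]
  have hdet : |(LinearMap.det (axialScaling n l⁻¹ (m * l ^ α)⁻¹))⁻¹| =
      l ^ (1 + α * (n - 1)) * m ^ ((n : ℝ) - 1) := by
    rw [det_axialScaling, mul_inv, inv_inv, inv_pow, inv_inv, abs_of_pos (by positivity), mul_pow,
      Real.rpow_add hl, Real.rpow_one, Real.rpow_mul hl.le, ← hn, Real.rpow_natCast,
      Real.rpow_natCast]
    ring
  rw [hpreimage, Measure.addHaar_preimage_linearMap, hdet]
  rw [det_axialScaling]
  positivity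

lemma volume_restrict_cuspDomain_apply_zero_lt {t : ℝ} (ht : t ∈ Ioo (0 : ℝ) 1) :
    volume.restrict (cuspDomain n α) {z | z 0 < t} =
      volume (cuspDomain n α) * ENNReal.ofReal (t ^ (1 + α * (n - 1))) := by
  have hmeas : MeasurableSet {z : EuclideanSpace ℝ (Fin n) | z 0 < t} :=
    measurableSet_lt (by fun_prop) measurable_const
  rw [Measure.restrict_apply hmeas, mul_comm]
  convert volume_setOf_lt_and_radial_lt (n := n) (α := α) ht.1 one_pos using 2
  · ext z
    simp only [cuspDomain, mem_inter_iff, mem_ofPred_eq, one_mul]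
    exact ⟨fun h => ⟨h.2.1, h.1, h.2.2.2⟩, fun h => ⟨h.2.1, h.1, h.2.1.trans ht.2, h.2.2⟩⟩
  · rw [Real.one_rpow, mul_one]

lemma measurable_cuspDepth :
    Measurable (cuspDepth α : EuclideanSpace ℝ (Fin n) → ℝ) := by
  have hcoord : Measurable fun z : EuclideanSpace ℝ (Fin n) => z 0 := by fun_prop
  exact (measurable_const.sub hcoord).min <|
    measurable_const.sub (continuous_radial.measurable.div (hcoord.pow_const α))

lemma setOf_lt_and_radial_lt_subset {t : ℝ} (ht : 0 < t) :
    {z : EuclideanSpace ℝ (Fin n) | 0 < z 0 ∧ z 0 < 1 - t ∧ radial z < (1 - t) * z 0 ^ α} ⊆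
      cuspDomain n α ∩ {z | t ≤ cuspDepth α z} := by
  rintro z ⟨hz0, hz1, hzr⟩
  have hpow := Real.rpow_pos_of_pos hz0 α
  exact ⟨⟨hz0, by linarith, by nlinarith⟩,
    le_min (le_sub_comm.1 hz1.le) (le_sub_comm.1 ((div_lt_iff₀ hpow).2 hzr).le)⟩

lemma volume_restrict_cuspDomain_cuspDepth_lt_le (hα : 0 ≤ α) {t : ℝ} (ht : t ∈ Ioo (0 : ℝ) 1) :
    volume.restrict (cuspDomain n α) {z | cuspDepth α z < t} ≤
      volume (cuspDomain n α) * ENNReal.ofReal (n + α * (n - 1)) * ENNReal.ofReal t := by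
  set V := volume (cuspDomain n α)
  set q : ℝ := n + α * (n - 1)
  have hn : (1 : ℝ) ≤ n := Nat.one_le_cast.2 NeZero.one_le
  have hq : 1 ≤ q := le_add_of_le_of_nonneg hn (mul_nonneg hα (sub_nonneg.2 hn))
  have ht1 : 0 < 1 - t := sub_pos.2 ht.2
  have hinner : V * ENNReal.ofReal ((1 - t) ^ q) ≤
      volume (cuspDomain n α ∩ {z | t ≤ cuspDepth α z}) := by
    refine le_of_eq_of_le ?_ (measure_mono (setOf_lt_and_radial_lt_subset ht.1))
    rw [volume_setOf_lt_and_radial_lt ht1 ht1, ← Real.rpow_add ht1, mul_comm]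
    congr 3
    ring
  have hbernoulli : 1 ≤ (1 - t) ^ q + q * t := by
    have := one_add_mul_self_le_rpow_one_add (s := -t) (by linarith [ht.2]) hq
    rw [← sub_eq_add_neg] at this
    linarith
  have hmeas : MeasurableSet {z : EuclideanSpace ℝ (Fin n) | t ≤ cuspDepth α z} :=
    measurableSet_le measurable_const measurable_cuspDepth
  have hcompl : {z : EuclideanSpace ℝ (Fin n) | cuspDepth α z < t} =
      {z | t ≤ cuspDepth α z}ᶜ := by
    ext z
    simp
  have hV : V * ENNReal.ofReal ((1 - t) ^ q) ≠ ⊤ :=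
    ENNReal.mul_ne_top (volume_cuspDomain_ne_top hα) ENNReal.ofReal_ne_top
  rw [hcompl, Measure.restrict_apply hmeas.compl, inter_comm, ← sdiff_eq]
  refine ENNReal.le_of_add_le_add_right hV ?_
  calc volume (cuspDomain n α \ {z | t ≤ cuspDepth α z}) + V * ENNReal.ofReal ((1 - t) ^ q)
      ≤ volume (cuspDomain n α \ {z | t ≤ cuspDepth α z}) +
          volume (cuspDomain n α ∩ {z | t ≤ cuspDepth α z}) := by gcongr
    _ = V * ENNReal.ofReal 1 := by
      rw [measure_sdiff_add_inter _ hmeas, ENNReal.ofReal_one, mul_one]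
    _ ≤ V * ENNReal.ofReal (q * t + (1 - t) ^ q) := by
      gcongr
      linarith
    _ = V * ENNReal.ofReal q * ENNReal.ofReal t + V * ENNReal.ofReal ((1 - t) ^ q) := by
      rw [ENNReal.ofReal_add (by nlinarith [ht.1]) (by positivity), mul_add,
        ENNReal.ofReal_mul (by linarith), mul_assoc]

end Volume

theorem isLsAveragingDomain_cuspDomain {n : ℕ} [NeZero n] {α : ℝ} (hα : 0 ≤ α) {s : ℝ} (hs : 1 ≤ s)
    (hαs : (max α 1 - 1) * s < 1 + α * (n - 1)) : IsLsAveragingDomain s (cuspDomain n α) := by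
  have hs0 : 0 < s := one_pos.trans_le hs
  have hmem : ∀ᵐ z ∂volume.restrict (cuspDomain n α), z ∈ cuspDomain n α :=
    ae_restrict_mem (isOpen_cuspDomain hα).measurableSet
  have : IsFiniteMeasure (volume.restrict (cuspDomain n α)) :=
    isFiniteMeasure_restrict.2 (volume_cuspDomain_ne_top hα)
  obtain ⟨δ, hδ, hfinite⟩ := exists_lintegral_rpow_mul_rpow_ne_top
    (f := fun z : EuclideanSpace ℝ (Fin n) => z 0) (g := cuspDepth α) (p' := 1)
    (c := (max α 1 - 1) * s) (by fun_prop) measurable_cuspDepth.aemeasurable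
    (hmem.mono fun z hz => hz.1) (hmem.mono fun z hz => cuspDepth_pos hz)
    (volume_cuspDomain_ne_top hα)
    (ENNReal.mul_ne_top (volume_cuspDomain_ne_top hα) ENNReal.ofReal_ne_top)
    (fun t ht => (volume_restrict_cuspDomain_apply_zero_lt ht).le)
    (fun t ht => by simpa using volume_restrict_cuspDomain_cuspDepth_lt_le hα ht) one_pos
    (mul_nonneg (sub_nonneg.2 (le_max_right _ _)) hs0.le) hαs
  obtain ⟨z₀, C, hC, hchain⟩ := exists_whitneyChainBound_cuspDomain (n := n) hα (div_pos hδ hs0)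
  refine isLsAveragingDomain_of_whitneyChainBound (isOpen_cuspDomain hα) nonempty_compl_cuspDomain
    (volume_cuspDomain_ne_zero hα) (volume_cuspDomain_ne_top hα) hs hchain ?_
  have hG : ∀ z ∈ cuspDomain n α,
      (C * ENNReal.ofReal (z 0 ^ (-(max α 1 - 1 + δ / s)) * cuspDepth α z ^ (-(δ / s)))) ^ s =
        C ^ s * ENNReal.ofReal (z 0 ^ (-((max α 1 - 1) * s + δ)) * cuspDepth α z ^ (-δ)) := by
    intro z hz
    have hz0 := hz.1
    have hdepth := cuspDepth_pos hz
    rw [ENNReal.mul_rpow_of_nonneg _ _ hs0.le,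
      ENNReal.ofReal_rpow_of_nonneg (by positivity) hs0.le,
      Real.mul_rpow (by positivity) (by positivity), ← Real.rpow_mul hz0.le,
      ← Real.rpow_mul hdepth.le, neg_mul, neg_mul, add_mul, div_mul_cancel₀ _ hs0.ne']
  rw [setLIntegral_congr_fun (isOpen_cuspDomain hα).measurableSet hG,
    lintegral_const_mul' _ _ (by finiteness)]
  exact ENNReal.mul_ne_top (by finiteness) hfinite

lemma ballOscillation_le_of_forall_abs_sub_le {X : Type*} [MeasurableSpace X]
    [PseudoMetricSpace X] [OpensMeasurableSpace X] [ProperSpace X] {μ : Measure X}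
    [μ.IsOpenPosMeasure] [IsFiniteMeasureOnCompacts μ] {p : ℝ≥0∞} (hp : 1 ≤ p) {u : X → ℝ}
    (hu : Measurable u) {Ω : Set X} {M : ℝ}
    (hM : ∀ a ρ, ball a ρ ⊆ Ω → ∀ z ∈ ball a ρ, |u z - u a| ≤ M) :
    ballOscillation μ p u Ω ≤ 2 * ENNReal.ofReal M := by
  refine iSup_le fun a => iSup_le fun ρ => iSup_le fun hball => ?_
  have := isProbabilityMeasure_cond_ball μ a hball.1
  rw [setAverage_eq_integral_cond]
  refine (eLpNorm_sub_integral_le hp hu.aestronglyMeasurable (u a)).trans ?_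
  gcongr
  refine (eLpNorm_le_of_ae_bound (C := M) ?_).trans_eq (by simp)
  filter_upwards [ProbabilityTheory.ae_cond_mem measurableSet_ball] with z hz
  exact hM a ρ hball.2 z hz

lemma abs_rpow_neg_sub_rpow_neg_le {q b x y : ℝ} (hq : 0 ≤ q) (hb : 0 < b) (hx : b ≤ x)
    (hy : b ≤ y) : |y ^ (-q) - x ^ (-q)| ≤ q * b ^ (-q - 1) * |y - x| := by
  refine Convex.norm_image_sub_le_of_norm_hasDerivWithin_le (f := fun x : ℝ => x ^ (-q))
    (f' := fun x => -q * x ^ (-q - 1)) (s := Ici b) (fun x hx => ?_) (fun x hx => ?_)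
    (convex_Ici b) hx hy
  · exact (Real.hasDerivAt_rpow_const (Or.inl (hb.trans_le hx).ne')).hasDerivWithinAt
  · have hpow : 0 < x ^ (-q - 1) := Real.rpow_pos_of_pos (hb.trans_le hx) _
    rw [norm_mul, norm_neg, Real.norm_of_nonneg hq, Real.norm_of_nonneg hpow.le]
    exact mul_le_mul_of_nonneg_left (Real.rpow_le_rpow_of_nonpos hb hx (by linarith)) hq

section Necessity

variable {n : ℕ} [NeZero n] {α : ℝ}

lemma exists_mem_ball_apply_zero_eq_and_le_radial (hn : 2 ≤ n) (a : EuclideanSpace ℝ (Fin n))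
    {c d ρ : ℝ} (hρ : 0 ≤ ρ) (hcd : c ^ 2 + d ^ 2 < ρ ^ 2) :
    ∃ z ∈ ball a ρ, z 0 = a 0 + c ∧ d ≤ radial z := by
  have : Nontrivial (Fin n) := Fin.nontrivial_iff_two_le.2 hn
  obtain ⟨i, hi⟩ := exists_ne (0 : Fin n)
  obtain ⟨d', hd', hle⟩ : ∃ d' : ℝ, d' ^ 2 = d ^ 2 ∧ d ≤ |a i + d'| := by
    rcases le_total 0 (a i * d) with h | h
    · refine ⟨d, rfl, (le_abs_self d).trans (sq_le_sq.1 ?_)⟩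
      nlinarith [sq_nonneg (a i)]
    · refine ⟨-d, neg_sq d, (le_abs_self d).trans (sq_le_sq.1 ?_)⟩
      nlinarith [sq_nonneg (a i)]
  set w : EuclideanSpace ℝ (Fin n) := EuclideanSpace.single 0 c + EuclideanSpace.single i d'
  have hw : ‖w‖ ^ 2 = c ^ 2 + d ^ 2 := by
    rw [norm_add_sq_real, EuclideanSpace.inner_single_left]
    simp [hi.symm, hd']
  refine ⟨a + w, ?_, by simp [w, hi.symm], hle.trans ?_⟩
  · rw [mem_ball_iff_norm, add_sub_cancel_left]
    exact lt_of_pow_lt_pow_left₀ 2 hρ (hw.trans_lt hcd)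
  · have happly : (a + w) i = a i + d' := by simp [w, hi]
    rw [← happly]
    exact Real.abs_le_sqrt (Finset.single_le_sum (f := fun j => (a + w) j ^ 2)
      (fun j _ => sq_nonneg _) (Finset.mem_erase.2 ⟨hi, Finset.mem_univ _⟩))

lemma radius_le_of_ball_subset_cuspDomain (hn : 2 ≤ n) (hα : 1 ≤ α)
    {a : EuclideanSpace ℝ (Fin n)} {ρ : ℝ} (hρ : 0 < ρ) (hball : ball a ρ ⊆ cuspDomain n α) :
    ρ ≤ 4 / 5 * a 0 ∧ ρ ≤ 5 / 4 * a 0 ^ α := by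
  obtain ⟨z, hz, hz_eq, hradial⟩ := exists_mem_ball_apply_zero_eq_and_le_radial hn a
    (c := -(ρ / 2)) (d := 4 / 5 * ρ) hρ.le (by nlinarith)
  obtain ⟨hz0, hz1, hzr⟩ := hball hz
  have hself : z 0 ^ α ≤ z 0 := by
    simpa using Real.rpow_le_rpow_of_exponent_ge hz0 hz1.le hα
  have hmono : z 0 ^ α ≤ a 0 ^ α := Real.rpow_le_rpow hz0.le (by linarith) (by linarith)
  constructor <;> linarith

lemma abs_rpow_one_sub_sub_le_of_ball_subset_cuspDomain (hn : 2 ≤ n) (hα : 1 ≤ α)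
    {a : EuclideanSpace ℝ (Fin n)} {ρ : ℝ} (hball : ball a ρ ⊆ cuspDomain n α)
    {z : EuclideanSpace ℝ (Fin n)} (hz : z ∈ ball a ρ) :
    |z 0 ^ (-(α - 1)) - a 0 ^ (-(α - 1))| ≤ 5 / 4 * (α - 1) * 5 ^ α := by
  have hρ : 0 < ρ := dist_nonneg.trans_lt hz
  obtain ⟨hρa, hρpow⟩ := radius_le_of_ball_subset_cuspDomain hn hα hρ hball
  have ha : 0 < a 0 := (hball (mem_ball_self hρ)).1
  have hcoord : |z 0 - a 0| ≤ ρ := (abs_apply_sub_apply_le_dist 0 z a).trans hz.le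
  have hz0 : a 0 / 5 ≤ z 0 := by linarith [(abs_le.1 hcoord).1]
  have hα1 := sub_nonneg.2 hα
  calc |z 0 ^ (-(α - 1)) - a 0 ^ (-(α - 1))|
      ≤ (α - 1) * (a 0 / 5) ^ (-(α - 1) - 1) * |z 0 - a 0| :=
        abs_rpow_neg_sub_rpow_neg_le hα1 (by positivity) (by linarith) hz0
    _ ≤ (α - 1) * (a 0 / 5) ^ (-α) * (5 / 4 * a 0 ^ α) := by
        rw [show -(α - 1) - 1 = -α by ring]
        gcongr
        exact hcoord.trans hρpow
    _ = 5 / 4 * (α - 1) * 5 ^ α := by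
        rw [Real.rpow_neg (by positivity), Real.div_rpow ha.le (by norm_num)]
        field_simp

lemma lintegral_enorm_rpow_cuspDomain_eq_top (hα : 1 < α) {s : ℝ} (hs : 0 < s)
    (hαs : 1 + α * (n - 1) ≤ (α - 1) * s) :
    ∫⁻ z in cuspDomain n α, ‖z 0 ^ (-(α - 1))‖ₑ ^ s = ⊤ := by
  have hα0 : 0 ≤ α := by linarith
  have hmeas : MeasurableSet (cuspDomain n α) := (isOpen_cuspDomain hα0).measurableSet
  rw [← lintegral_ofReal_rpow_neg_eq_top (μ := volume.restrict (cuspDomain n α))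
    (f := fun z => z 0) (by fun_prop) ((ae_restrict_mem hmeas).mono fun z hz => hz.1)
    (volume_cuspDomain_ne_zero hα0) (fun t ht => (volume_restrict_cuspDomain_apply_zero_lt ht).ge)
    (mul_pos (sub_pos.2 hα) hs) hαs]
  refine setLIntegral_congr_fun hmeas fun z hz => ?_
  have hz0 := hz.1
  rw [Real.enorm_of_nonneg (by positivity), ENNReal.ofReal_rpow_of_nonneg (by positivity) hs.le,
    ← Real.rpow_mul hz0.le, neg_mul]

theorem not_isLsAveragingDomain_cuspDomain (hn : 2 ≤ n) (hα : 1 < α) {s : ℝ} (hs : 1 ≤ s)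
    (hαs : 1 + α * (n - 1) ≤ (α - 1) * s) : ¬ IsLsAveragingDomain s (cuspDomain n α) := by
  intro h
  have hs0 : 0 < s := one_pos.trans_le hs
  have hα0 : 0 ≤ α := by linarith
  obtain ⟨C, hC, hbound⟩ := (isLsAveragingDomain_iff hs0).1 h
  set u : EuclideanSpace ℝ (Fin n) → ℝ := fun z => z 0 ^ (-(α - 1))
  have hu : Measurable u := by fun_prop
  have hloc : LocallyIntegrableOn u (cuspDomain n α) :=
    ContinuousOn.locallyIntegrableOn
      (ContinuousOn.rpow_const (by fun_prop) fun z hz => Or.inl hz.1.ne')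
      (isOpen_cuspDomain hα0).measurableSet
  have hosc : ballOscillation volume (ENNReal.ofReal s) u (cuspDomain n α) ≤
      2 * ENNReal.ofReal (5 / 4 * (α - 1) * 5 ^ α) :=
    ballOscillation_le_of_forall_abs_sub_le (ENNReal.one_le_ofReal.2 hs) hu fun a ρ hball z hz =>
      abs_rpow_one_sub_sub_le_of_ball_subset_cuspDomain hn hα.le hball hz
  have hfin : eLpNorm (fun z => u z - ⨍ y in cuspDomain n α, u y) (ENNReal.ofReal s)
      volume[|cuspDomain n α] ≠ ⊤ :=
    ne_top_of_le_ne_top (by finiteness) ((hbound u hloc).trans (mul_le_mul_right hosc C))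
  have : IsProbabilityMeasure volume[|cuspDomain n α] :=
    ProbabilityTheory.cond_isProbabilityMeasure_of_finite (volume_cuspDomain_ne_zero hα0)
      (volume_cuspDomain_ne_top hα0)
  have hmem := (memLp_of_eLpNorm_sub_const_ne_top hu.aestronglyMeasurable hfin).2.ne
  rw [eLpNorm_ofReal_eq_lintegral_rpow hs0, lintegral_cond] at hmem
  apply hmem
  rw [lintegral_enorm_rpow_cuspDomain_eq_top hα hs0 hαs,
    ENNReal.mul_top (ENNReal.inv_ne_zero.2 (volume_cuspDomain_ne_top hα0)),
    ENNReal.top_rpow_of_pos (by positivity)]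

end Necessity

/-- The cusp domain `Ω_α` is `L^s`-averaging iff
`(α − 1)(s − n + 1) < n`. -/
theorem cusp_LsAveraging_iff (n : ℕ) [NeZero n] (hn : 2 ≤ n) (α : ℝ) (hα : 0 ≤ α)
    (s : ℝ) (hs : 1 ≤ s) :
    IsLsAveragingDomain s (cuspDomain n α) ↔ (α - 1) * (s - n + 1) < n := by
  have hn' : (1 : ℝ) ≤ n := by exact_mod_cast one_le_two.trans hn
  have hcond : (α - 1) * (s - n + 1) < n ↔ (α - 1) * s < 1 + α * (n - 1) := by
    constructor <;> intro h <;> linarith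
  rw [hcond]
  rcases le_or_gt α 1 with hα1 | hα1
  · have hpos : 0 < 1 + α * ((n : ℝ) - 1) := by nlinarith
    refine iff_of_true (isLsAveragingDomain_cuspDomain hα hs ?_) ?_
    · simpa [max_eq_right hα1] using hpos
    · exact (mul_nonpos_of_nonpos_of_nonneg (by linarith) (by linarith)).trans_lt hpos
  · refine ⟨fun h => ?_, fun h => isLsAveragingDomain_cuspDomain hα hs ?_⟩
    · by_contra! hle
      exact not_isLsAveragingDomain_cuspDomain hn hα1 hs hle h
    · rwa [max_eq_left hα1.le]
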